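/- arXiv:2005.12063 — 2 statements merged into one kernel-verified Lean document; each statement's English description precedes it below -/
import Mathlib

section
/- If K₁ and K₂ are disjoint compact subsets of ℂⁿ such that K₁ ∪ K₂ is polynomially convex, then for any compact polynomially convex subset K₁' ⊆ K₁, the union K₁' ∪ K₂ is also polynomially convex. -/
noncomputable section
open Set Metric MvPolynomial

/-- The polynomially convex hull of a set in `ℂⁿ`. -/
def polyHull {n : ℕ} (K : Set (EuclideanSpace ℂ (Fin n))) : Set (EuclideanSpace ℂ (Fin n)) :=
  {z | ∀ p : MvPolynomial (Fin n) ℂ,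
    ‖eval (fun i => z i) p‖ ≤ sSup ((fun w => ‖eval (fun i => w i) p‖) '' K)}

/-- A compact set in `ℂⁿ` is polynomially convex if it equals its polynomial hull. -/
def IsPolyConvex {n : ℕ} (K : Set (EuclideanSpace ℂ (Fin n))) : Prop :=
  polyHull K = K

/-- Polynomial hull for subsets of a product `ℂᴺ × ℂⁿ ≅ ℂ^{N+n}`, using polynomials in the
`N + n` coordinates. -/
def polyHull2 {N n : ℕ} (S : Set (EuclideanSpace ℂ (Fin N) × EuclideanSpace ℂ (Fin n))) :
    Set (EuclideanSpace ℂ (Fin N) × EuclideanSpace ℂ (Fin n)) :=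
  {z | ∀ p : MvPolynomial (Fin N ⊕ Fin n) ℂ,
    ‖eval (Sum.elim (fun i => z.1 i) (fun j => z.2 j)) p‖ ≤
      sSup ((fun w => ‖eval (Sum.elim (fun i => w.1 i) (fun j => w.2 j)) p‖) '' S)}

def IsPolyConvex2 {N n : ℕ} (S : Set (EuclideanSpace ℂ (Fin N) × EuclideanSpace ℂ (Fin n))) :
    Prop :=
  polyHull2 S = S

/-!
Let `K = K₁ ∪ K₂` and let `P(K)` be the algebra of uniform limits of polynomials on `K`. As `K` is
polynomially convex, the characters of `P(K)` are the evaluations at the points of `K`, so Shilov's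
idempotent theorem shows that the indicator function of `K₁` belongs to `P(K)`. Multiplying
polynomials by it removes `K₂` from the estimates that define the hull of `L ∪ K₂`, for `L ⊆ K₁`.

Shilov's theorem attaches an idempotent of a Banach algebra `S` to a clopen set `E` of characters.
By compactness finitely many units `f` of `S` separate `E` from its complement, in the sense that
for `φ ∈ E` and `ψ ∉ E` one of them has `|φ f| < 1 < |ψ f|`. Induct on their number. The characters
of the Laurent series with coefficients in `S` on the annulus `r ≤ |w| ≤ 1`, modulo `w - f`, are the
characters of `S` with `|f| ≤ 1`, provided that `r` is small, and likewise for `1 ≤ |w| ≤ R` and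
`1 ≤ |f|`. On each of these sets `f` does not separate, so by induction there is an idempotent, and
the two are equal over `|w| = 1`. Splitting Laurent series solves the additive Cousin problem, so
they glue: modulo a finitely generated ideal the obstruction to gluing is nilpotent, and idempotents
lift uniquely along nilpotents. The ideals need not be closed, so all quotients are algebraic.
-/

section CousinSquare

variable {F A B Z : Type*} [CommRing F] [CommRing A] [CommRing B] [CommRing Z]

/-- A commutative square of rings for which `0 → F → A × B → Z → 0` is exact, the last map being
the difference. This is the situation of the additive Cousin problem: `A`, `B` and `Z` are functions
on two sets and on their intersection, and `F` consists of the functions on the union. -/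
structure IsCousinSquare (iA : F →+* A) (iB : F →+* B) (jA : A →+* Z) (jB : B →+* Z) : Prop where
  comm : ∀ x, jA (iA x) = jB (iB x)
  inj : ∀ x, iA x = 0 → iB x = 0 → x = 0
  glue : ∀ a b, jA a = jB b → ∃ x, iA x = a ∧ iB x = b
  split : ∀ z, ∃ a b, jA a - jB b = z

variable {iA : F →+* A} {iB : F →+* B} {jA : A →+* Z} {jB : B →+* Z}

lemma mem_map_span_range_iff {ι R R' : Type*} [Fintype ι] [CommRing R] [CommRing R'] (φ : R →+* R')
    (t : ι → R) (x : R') :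
    x ∈ (Ideal.span (range t)).map φ ↔ ∃ c : ι → R', ∑ i, c i * φ (t i) = x := by
  rw [Ideal.map_span, ← range_comp, Ideal.mem_span_range_iff_exists_fun]
  rfl

lemma sum_mul_sub_swap_mul_eq_zero {ι R : Type*} [Fintype ι] [CommRing R] (u : ι → R)
    (m : ι → ι → R) : ∑ l, (∑ k, u k * (m k l - m l k)) * u l = 0 := by
  simp only [mul_sub, sub_mul, Finset.sum_sub_distrib, Finset.sum_mul]
  rw [sub_eq_zero, Finset.sum_comm]
  exact Finset.sum_congr rfl fun _ _ => Finset.sum_congr rfl fun _ _ => by ring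

lemma sum_mul_mul_sub_mul_of_syzygy {ι R : Type*} [Fintype ι] [CommRing R] {t u δ : ι → R} {b : R}
    (hu : ∑ k, u k * t k = b) (hδ : ∑ k, δ k * t k = 0) (l : ι) :
    ∑ k, t k * (u k * δ l - u l * δ k) = b * δ l :=
  calc ∑ k, t k * (u k * δ l - u l * δ k)
      = (∑ k, u k * t k) * δ l - u l * ∑ k, δ k * t k := by
        rw [Finset.sum_mul, Finset.mul_sum, ← Finset.sum_sub_distrib]
        exact Finset.sum_congr rfl fun k _ => by ring
    _ = b * δ l := by rw [hu, hδ, mul_zero, sub_zero]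

namespace IsCousinSquare

lemma eq_of_eq (hQ : IsCousinSquare iA iB jA jB) {x y : F} (hA : iA x = iA y) (hB : iB x = iB y) :
    x = y :=
  sub_eq_zero.1 <| hQ.inj _ (by rw [map_sub, hA, sub_self]) (by rw [map_sub, hB, sub_self])

lemma exists_sub_mem_map (hQ : IsCousinSquare iA iB jA jB) {I : Ideal F} (hI : I.FG) {a : A} {b : B}
    (hab : jA a - jB b ∈ (I.map iA).map jA) :
    ∃ x, iA x - a ∈ I.map iA ∧ iB x - b ∈ I.map iB := by
  obtain ⟨n, t, rfl⟩ := Submodule.fg_iff_exists_fin_generating_family.1 hI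
  rw [Ideal.map_map, mem_map_span_range_iff] at hab
  obtain ⟨c, hc⟩ := hab
  choose α β hαβ using fun i => hQ.split (c i)
  obtain ⟨x, hxA, hxB⟩ := hQ.glue (a - ∑ i, α i * iA (t i)) (b - ∑ i, β i * iB (t i)) <| by
    have hc' : ∑ i, (jA (α i) * jA (iA (t i)) - jB (β i) * jA (iA (t i))) = jA a - jB b := by
      simp only [← hc, ← hαβ, sub_mul, RingHom.comp_apply]
    simp only [map_sub, map_sum, map_mul, ← hQ.comm]
    rw [Finset.sum_sub_distrib] at hc'
    linear_combination -hc'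
  refine ⟨x, (mem_map_span_range_iff _ _ _).2 ⟨fun i => -α i, ?_⟩,
    (mem_map_span_range_iff _ _ _).2 ⟨fun i => -β i, ?_⟩⟩
  · simp [hxA]
  · simp [hxB]

/- Write `b = ∑ gᵢ tᵢ` in `A` and `b = ∑ g'ᵢ tᵢ` in `B`. The difference `δ` of `g` and `g'` is a
syzygy of `t` over `Z`, so `b δₗ = ∑ₖ tₖ (gₖ δₗ - gₗ δₖ)` is a Koszul boundary. Splitting its
coefficients corrects `b g` and `b g'` to coefficients that glue. -/
lemma sq_mem_of_mem_map (hQ : IsCousinSquare iA iB jA jB) {I : Ideal F} (hI : I.FG) {b : F}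
    (hA : iA b ∈ I.map iA) (hB : iB b ∈ I.map iB) : b ^ 2 ∈ I := by
  obtain ⟨n, t, rfl⟩ := Submodule.fg_iff_exists_fin_generating_family.1 hI
  obtain ⟨g, hg⟩ := (mem_map_span_range_iff _ _ _).1 hA
  obtain ⟨g', hg'⟩ := (mem_map_span_range_iff _ _ _).1 hB
  set δ : Fin n → Z := fun l => jA (g l) - jB (g' l) with hδ
  have hgZ : ∑ k, jA (g k) * jA (iA (t k)) = jA (iA b) := by simp only [← hg, map_sum, map_mul]
  have hδ_syzygy : ∑ k, δ k * jA (iA (t k)) = 0 := by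
    have hgZ' : ∑ k, jB (g' k) * jA (iA (t k)) = jA (iA b) := by
      simp only [hQ.comm, ← hg', map_sum, map_mul]
    simp only [hδ, sub_mul, Finset.sum_sub_distrib, hgZ, hgZ', sub_self]
  have hkoszul := sum_mul_mul_sub_mul_of_syzygy hgZ hδ_syzygy
  choose α β hαβ using fun k l => hQ.split (jA (g k) * δ l)
  have hglue (l) : ∃ x, iA x = iA b * g l - ∑ k, iA (t k) * (α k l - α l k) ∧
      iB x = iB b * g' l - ∑ k, iB (t k) * (β k l - β l k) := by
    apply hQ.glue
    have h : ∑ k, jA (iA (t k)) * (jA (α k l) - jA (α l k)) -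
        ∑ k, jA (iA (t k)) * (jB (β k l) - jB (β l k)) = jA (iA b) * δ l := by
      rw [← hkoszul, ← Finset.sum_sub_distrib]
      exact Finset.sum_congr rfl fun k _ => by rw [← hαβ, ← hαβ]; ring
    simp only [map_sub, map_mul, map_sum, ← hQ.comm]
    linear_combination -h
  choose x hxA hxB using hglue
  refine Ideal.mem_span_range_iff_exists_fun.2 ⟨x, hQ.eq_of_eq ?_ ?_⟩
  · simp only [map_sum, map_mul, map_pow, hxA, sub_mul, Finset.sum_sub_distrib,
      sum_mul_sub_swap_mul_eq_zero (fun k => iA (t k)), mul_assoc, ← Finset.mul_sum, hg]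
    ring
  · simp only [map_sum, map_mul, map_pow, hxB, sub_mul, Finset.sum_sub_distrib,
      sum_mul_sub_swap_mul_eq_zero (fun k => iB (t k)), mul_assoc, ← Finset.mul_sum, hg']
    ring

theorem exists_isIdempotentElem_quotient (hQ : IsCousinSquare iA iB jA jB) {I : Ideal F}
    (hI : I.FG) {IA : Ideal A} {IB : Ideal B} {IZ : Ideal Z} (hA : I.map iA = IA)
    (hB : I.map iB = IB) (hZA : IA.map jA = IZ) (hZB : IB ≤ IZ.comap jB) {a : A ⧸ IA} {b : B ⧸ IB}
    (ha : IsIdempotentElem a) (hb : IsIdempotentElem b)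
    (hab : Ideal.quotientMap IZ jA (Ideal.map_le_iff_le_comap.1 hZA.le) a =
      Ideal.quotientMap IZ jB hZB b) :
    ∃ e : F ⧸ I, IsIdempotentElem e ∧
      Ideal.quotientMap IA iA (Ideal.map_le_iff_le_comap.1 hA.le) e = a ∧
      Ideal.quotientMap IB iB (Ideal.map_le_iff_le_comap.1 hB.le) e = b := by
  subst hA hB hZA
  set ρ : F ⧸ I →+* (A ⧸ I.map iA) × (B ⧸ I.map iB) :=
    (Ideal.quotientMap _ iA Ideal.le_comap_map).prod (Ideal.quotientMap _ iB Ideal.le_comap_map)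
  have hker : ∀ x ∈ RingHom.ker ρ, IsNilpotent x := by
    intro x hx
    obtain ⟨x, rfl⟩ := Ideal.Quotient.mk_surjective x
    have hx' := Prod.ext_iff.1 (RingHom.mem_ker.1 hx)
    refine ⟨2, ?_⟩
    rw [← map_pow, Ideal.Quotient.eq_zero_iff_mem]
    exact hQ.sq_mem_of_mem_map hI (Ideal.Quotient.eq_zero_iff_mem.1 hx'.1)
      (Ideal.Quotient.eq_zero_iff_mem.1 hx'.2)
  have hrange : (a, b) ∈ ρ.range := by
    obtain ⟨a, rfl⟩ := Ideal.Quotient.mk_surjective a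
    obtain ⟨b, rfl⟩ := Ideal.Quotient.mk_surjective b
    obtain ⟨x, hxA, hxB⟩ := hQ.exists_sub_mem_map hI (Ideal.Quotient.eq.1 hab)
    exact ⟨Ideal.Quotient.mk I x, Prod.ext (Ideal.Quotient.eq.2 hxA) (Ideal.Quotient.eq.2 hxB)⟩
  obtain ⟨e, he, hρ⟩ := exists_isIdempotentElem_eq_of_ker_isNilpotent ρ hker (a, b) hrange
    (Prod.ext ha hb)
  exact ⟨e, he, (Prod.ext_iff.1 hρ).1, (Prod.ext_iff.1 hρ).2⟩

end IsCousinSquare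

end CousinSquare

section Characters

variable {R R' Q : Type*} [CommRing R] [Algebra ℂ R] [CommRing R'] [Algebra ℂ R'] [CommRing Q]
  [Algebra ℂ Q]

/-- `e` is an idempotent whose Gelfand transform is the indicator function of the set `Φ` of
characters. Characters are algebra homomorphisms, so that the notion applies to quotients of Banach
algebras by ideals that need not be closed. -/
structure IsIndicatorElem (e : R) (Φ : Set (R →ₐ[ℂ] ℂ)) : Prop where
  isIdempotentElem : IsIdempotentElem e
  apply_eq : ∀ φ : R →ₐ[ℂ] ℂ, φ e = Φ.indicator 1 φ

lemma IsIndicatorElem.map {e : R} {Φ : Set (R →ₐ[ℂ] ℂ)} (he : IsIndicatorElem e Φ)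
    (ψ : R →ₐ[ℂ] R') : IsIndicatorElem (ψ e) ((fun χ => χ.comp ψ) ⁻¹' Φ) where
  isIdempotentElem := he.isIdempotentElem.map ψ
  apply_eq χ := he.apply_eq (χ.comp ψ)

lemma IsIndicatorElem.map_of_comp_eq {e : R} {Φ : Set (Q →ₐ[ℂ] ℂ)} {ι : Q →ₐ[ℂ] R}
    {ι' : Q →ₐ[ℂ] R'} {ψ : R →ₐ[ℂ] R'} (he : IsIndicatorElem e ((fun χ => χ.comp ι) ⁻¹' Φ))
    (hψ : ψ.comp ι = ι') : IsIndicatorElem (ψ e) ((fun χ => χ.comp ι') ⁻¹' Φ) := by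
  subst hψ
  exact he.map ψ

variable {S : Type*} [NormedCommRing S] [NormedAlgebra ℂ S] [CompleteSpace S] {I : Ideal S}

lemma isUnit_quotient_of_forall_algHom_ne_zero {x : S ⧸ I}
    (hx : ∀ φ : (S ⧸ I) →ₐ[ℂ] ℂ, φ x ≠ 0) : IsUnit x := by
  by_contra hunit
  obtain ⟨M, hM, hxM⟩ := exists_max_ideal_of_mem_nonunits hunit
  have : (M.comap (Ideal.Quotient.mk I)).IsMaximal :=
    Ideal.comap_isMaximal_of_surjective _ Ideal.Quotient.mk_surjective
  set χ := (M.comap (Ideal.Quotient.mk I)).toCharacterSpace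
  have hχ (s : S) (hs : Ideal.Quotient.mk I s ∈ M) : χ s = 0 :=
    Ideal.toCharacterSpace_apply_eq_zero_of_mem _ hs
  obtain ⟨s, rfl⟩ := Ideal.Quotient.mk_surjective x
  refine hx (Ideal.Quotient.liftₐ I (WeakDual.CharacterSpace.equivAlgHom χ) fun t ht => hχ t ?_)
    (hχ s hxM)
  rw [Ideal.Quotient.eq_zero_iff_mem.2 ht]
  exact M.zero_mem

lemma IsIndicatorElem.unique {a b : S ⧸ I} {Φ : Set ((S ⧸ I) →ₐ[ℂ] ℂ)} (ha : IsIndicatorElem a Φ)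
    (hb : IsIndicatorElem b Φ) : a = b := by
  have hunit : IsUnit (1 - (a - b) ^ 2) := isUnit_quotient_of_forall_algHom_ne_zero fun φ => by
    simp [ha.apply_eq, hb.apply_eq]
  have hzero : (a - b) * (1 - (a - b) ^ 2) = 0 := by
    linear_combination (3 * b - a - 1) * ha.isIdempotentElem.eq +
      (b + 1 - 3 * a) * hb.isIdempotentElem.eq
  exact sub_eq_zero.1 (hunit.mul_left_eq_zero.1 hzero)

end Characters

section WeightedConvolution

/-- A submultiplicative weight on an additive monoid, as in the definition of a Beurling algebra. -/
structure SubmultiplicativeWeight (G : Type*) [AddMonoid G] where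
  toFun : G → ℝ
  nonneg : ∀ g, 0 ≤ toFun g
  map_zero : toFun 0 = 1
  map_add_le_mul : ∀ g h, toFun (g + h) ≤ toFun g * toFun h

instance {G : Type*} [AddMonoid G] : CoeFun (SubmultiplicativeWeight G) fun _ => G → ℝ :=
  ⟨SubmultiplicativeWeight.toFun⟩

variable {𝕜 G S T M N : Type*} [AddCommMonoid G]

/-- The monoid algebra `S[G]`, to be normed by `‖∑ s_g g‖ = ∑ ω g * ‖s_g‖`. -/
def WeightedMonoidAlgebra (_ω : SubmultiplicativeWeight G) (S : Type*) [Semiring S] : Type _ :=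
  AddMonoidAlgebra S G

namespace WeightedMonoidAlgebra

variable {ω : SubmultiplicativeWeight G} [NormedCommRing S] [NormedField 𝕜] [NormedAlgebra 𝕜 S]

instance : CommRing (WeightedMonoidAlgebra ω S) := inferInstanceAs (CommRing (AddMonoidAlgebra S G))

instance : Algebra 𝕜 (WeightedMonoidAlgebra ω S) :=
  inferInstanceAs (Algebra 𝕜 (AddMonoidAlgebra S G))

instance : Norm (WeightedMonoidAlgebra ω S) where
  norm x := (AddMonoidAlgebra.coeff x).sum fun g s => ω g * ‖s‖

lemma norm_def (x : WeightedMonoidAlgebra ω S) :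
    ‖x‖ = (AddMonoidAlgebra.coeff x).sum fun g s => ω g * ‖s‖ := rfl

variable (ω) in
/-- The inclusion of the summand of degree `g`. -/
def single (g : G) : S →+ WeightedMonoidAlgebra ω S := AddMonoidAlgebra.singleAddHom g

lemma norm_single (g : G) (s : S) : ‖single ω g s‖ = ω g * ‖s‖ :=
  Finsupp.sum_single_index (by simp)

@[elab_as_elim]
lemma induction {p : WeightedMonoidAlgebra ω S → Prop} (x : WeightedMonoidAlgebra ω S) (zero : p 0)
    (add : ∀ x y, p x → p y → p (x + y)) (single : ∀ g s, p (single ω g s)) : p x :=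
  AddMonoidAlgebra.induction_linear x zero add single

lemma one_def : (1 : WeightedMonoidAlgebra ω S) = single ω 0 1 := rfl

lemma single_mul_single (g h : G) (s t : S) :
    single ω g s * single ω h t = single ω (g + h) (s * t) :=
  AddMonoidAlgebra.single_mul_single ..

lemma norm_le_mul_norm_of_single [SeminormedAddCommGroup M] (f : WeightedMonoidAlgebra ω S →+ M)
    {C : ℝ} (hf : ∀ g s, ‖f (single ω g s)‖ ≤ C * (ω g * ‖s‖)) (x : WeightedMonoidAlgebra ω S) :
    ‖f x‖ ≤ C * ‖x‖ := by
  have hx : f x = (AddMonoidAlgebra.coeff x).sum fun g s => f (single ω g s) := by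
    conv_lhs => rw [← AddMonoidAlgebra.sum_coeff_single x]
    exact map_finsuppSum f _ _
  rw [hx, norm_def, Finsupp.sum, Finsupp.sum, Finset.mul_sum]
  exact norm_sum_le_of_le _ fun g _ => hf g _

instance : SeminormedAddCommGroup (WeightedMonoidAlgebra ω S) :=
  AddGroupSeminorm.toSeminormedAddCommGroup
    { toFun := norm
      map_zero' := Finsupp.sum_zero_index
      add_le' x y := by
        classical
        have hsum (z : WeightedMonoidAlgebra ω S) {u : Finset G}
            (hu : (AddMonoidAlgebra.coeff z).support ⊆ u) :
            ‖z‖ = ∑ g ∈ u, ω g * ‖AddMonoidAlgebra.coeff z g‖ :=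
          Finsupp.sum_of_support_subset _ hu _ (by simp)
        rw [hsum (x + y) Finsupp.support_add, hsum x Finset.subset_union_left,
          hsum y Finset.subset_union_right, ← Finset.sum_add_distrib]
        refine Finset.sum_le_sum fun g _ => ?_
        rw [← mul_add]
        exact mul_le_mul_of_nonneg_left (norm_add_le _ _) (ω.nonneg g)
      neg' x := by
        have hcoeff : AddMonoidAlgebra.coeff (-x) = -AddMonoidAlgebra.coeff x := rfl
        simp only [norm_def, hcoeff, Finsupp.sum, Finsupp.support_neg, Finsupp.neg_apply,
          norm_neg] }

lemma norm_mul_le_mul_norm (x y : WeightedMonoidAlgebra ω S) : ‖x * y‖ ≤ ‖x‖ * ‖y‖ := by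
  rw [mul_comm ‖x‖]
  refine norm_le_mul_norm_of_single (AddMonoidHom.mulRight y) (fun g s => ?_) x
  rw [mul_comm ‖y‖]
  refine norm_le_mul_norm_of_single (AddMonoidHom.mulLeft (single ω g s)) (fun h t => ?_) y
  calc ‖single ω g s * single ω h t‖ = ω (g + h) * ‖s * t‖ := by
        rw [single_mul_single, norm_single]
    _ ≤ ω g * ω h * (‖s‖ * ‖t‖) := by
        gcongr
        exacts [mul_nonneg (ω.nonneg g) (ω.nonneg h), ω.map_add_le_mul g h, norm_mul_le s t]
    _ = ω g * ‖s‖ * (ω h * ‖t‖) := by ring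

instance : SeminormedCommRing (WeightedMonoidAlgebra ω S) where
  __ : SeminormedAddCommGroup (WeightedMonoidAlgebra ω S) := inferInstance
  __ : CommRing (WeightedMonoidAlgebra ω S) := inferInstance
  norm_mul_le := norm_mul_le_mul_norm

instance : NormedAlgebra 𝕜 (WeightedMonoidAlgebra ω S) where
  norm_smul_le c x := norm_le_mul_norm_of_single (DistribSMul.toAddMonoidHom _ c) (fun g s => by
    have h : c • single ω g s = single ω g (c • s) := AddMonoidAlgebra.smul_single ..
    rw [DistribSMul.toAddMonoidHom_apply, h, norm_single, norm_smul, mul_left_comm]) x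

instance [NormOneClass S] : NormOneClass (WeightedMonoidAlgebra ω S) :=
  ⟨by rw [one_def, norm_single, ω.map_zero, norm_one, one_mul]⟩

/-- The additive extension of a family of maps on the summands. -/
def liftAddHom [AddCommMonoid N] (f : G → S →+ N) : WeightedMonoidAlgebra ω S →+ N :=
  (Finsupp.liftAddHom f).comp AddMonoidAlgebra.coeffAddEquiv.toAddMonoidHom

lemma liftAddHom_single [AddCommMonoid N] (f : G → S →+ N) (g : G) (s : S) :
    liftAddHom f (single ω g s) = f g s :=
  Finsupp.sum_single_index (map_zero (f g))

/-- The algebra homomorphism that is `η` on coefficients and `u` on monomials. -/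
def lift [CommRing T] [Algebra 𝕜 T] (η : S →ₐ[𝕜] T) (u : Multiplicative G →* T) :
    WeightedMonoidAlgebra ω S →ₐ[𝕜] T :=
  AddMonoidAlgebra.liftNCAlgHom η u fun _ _ => .all _ _

lemma lift_single [CommRing T] [Algebra 𝕜 T] (η : S →ₐ[𝕜] T) (u : Multiplicative G →* T) (g : G)
    (s : S) : lift η u (single ω g s) = η s * u (.ofAdd g) :=
  AddMonoidAlgebra.liftNC_single ..

lemma continuous_of_norm_single_le [SeminormedAddCommGroup N] (f : WeightedMonoidAlgebra ω S →+ N)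
    (hf : ∀ g s, ‖f (single ω g s)‖ ≤ ω g * ‖s‖) : Continuous f :=
  AddMonoidHomClass.continuous_of_bound f 1 <|
    norm_le_mul_norm_of_single f fun g s => by rw [one_mul]; exact hf g s

lemma continuous_lift [NormedCommRing T] [NormedAlgebra 𝕜 T] {η : S →ₐ[𝕜] T}
    {u : Multiplicative G →* T} (hu : ∀ g s, ‖η s * u (.ofAdd g)‖ ≤ ω g * ‖s‖) :
    Continuous (lift (ω := ω) η u) :=
  continuous_of_norm_single_le (lift (ω := ω) η u).toAddMonoidHom fun g s =>
    (lift_single η u g s).symm ▸ hu g s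

end WeightedMonoidAlgebra

/-- The Beurling algebra `ℓ¹(G, ω; S)`: formal sums `∑ s_g g` with `∑ ω g * ‖s_g‖ < ∞`, modulo those
of norm zero, under convolution. -/
abbrev BeurlingAlgebra (ω : SubmultiplicativeWeight G) (S : Type*) [NormedCommRing S] : Type _ :=
  UniformSpace.Completion (WeightedMonoidAlgebra ω S)

namespace BeurlingAlgebra

open UniformSpace (Completion)

variable {ω ω₁ ω₂ : SubmultiplicativeWeight G} [NormedCommRing S] [NormedCommRing T]
  [CompleteSpace T] [NormedAddCommGroup M] [CompleteSpace M]

variable (ω) in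
/-- The inclusion of the summand of degree `g`. -/
def single (g : G) : S →+ BeurlingAlgebra ω S :=
  Completion.toCompl.comp (WeightedMonoidAlgebra.single ω g)

lemma norm_single (g : G) (s : S) : ‖single ω g s‖ = ω g * ‖s‖ :=
  (Completion.norm_coe _).trans (WeightedMonoidAlgebra.norm_single g s)

lemma single_mul_single (g h : G) (s t : S) :
    single ω g s * single ω h t = single ω (g + h) (s * t) := by
  rw [single, single, single, AddMonoidHom.comp_apply]
  exact (Completion.coe_mul ..).symm.trans
    (congrArg _ (WeightedMonoidAlgebra.single_mul_single g h s t))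

@[elab_as_elim]
lemma induction {p : BeurlingAlgebra ω S → Prop} (x : BeurlingAlgebra ω S)
    (closed : IsClosed {x | p x}) (add : ∀ x y, p x → p y → p (x + y))
    (single : ∀ g s, p (single ω g s)) : p x := by
  induction x using Completion.induction_on with
  | hp => exact closed
  | ih x =>
    induction x using WeightedMonoidAlgebra.induction with
    | zero => simpa [BeurlingAlgebra.single] using single 0 0
    | add x y hx hy => rw [Completion.coe_add]; exact add _ _ hx hy
    | single g s => exact single g s

instance [NormOneClass S] : NormOneClass (BeurlingAlgebra ω S) :=
  ⟨by rw [← Completion.coe_one, Completion.norm_coe, norm_one]⟩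

section AddHom

variable {f : G → S →+ M} (hf : ∀ g s, ‖f g s‖ ≤ ω g * ‖s‖)

/-- The continuous additive extension of a bounded family of maps on the summands. -/
def liftAddHom : BeurlingAlgebra ω S →+ M :=
  AddMonoidHom.extension (WeightedMonoidAlgebra.liftAddHom f) <|
    WeightedMonoidAlgebra.continuous_of_norm_single_le _ fun g s =>
      (WeightedMonoidAlgebra.liftAddHom_single f g s).symm ▸ hf g s

lemma continuous_liftAddHom : Continuous (liftAddHom hf) := Completion.continuous_extension

lemma liftAddHom_single (g : G) (s : S) : liftAddHom hf (single ω g s) = f g s :=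
  (AddMonoidHom.extension_coe ..).trans (WeightedMonoidAlgebra.liftAddHom_single f g s)

end AddHom

section AlgHom

variable [NormedField 𝕜] [NormedAlgebra 𝕜 S] [NormedAlgebra 𝕜 T]

section Lift

variable {η : S →ₐ[𝕜] T} {u : Multiplicative G →* T}
  (hu : ∀ g s, ‖η s * u (.ofAdd g)‖ ≤ ω g * ‖s‖)

/-- The algebra homomorphism that is `η` on coefficients and `u` on monomials. -/
def lift : BeurlingAlgebra ω S →ₐ[𝕜] T where
  __ := Completion.extensionHom (WeightedMonoidAlgebra.lift (ω := ω) η u).toRingHom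
    (WeightedMonoidAlgebra.continuous_lift hu)
  commutes' c := by
    rw [Completion.algebraMap_def]
    exact (Completion.extensionHom_coe ..).trans (AlgHom.commutes _ c)

lemma continuous_lift : Continuous (lift hu) := Completion.continuous_extension

lemma lift_single (g : G) (s : S) : lift hu (single ω g s) = η s * u (.ofAdd g) :=
  (Completion.extensionHom_coe _ (WeightedMonoidAlgebra.continuous_lift hu) _).trans
    (WeightedMonoidAlgebra.lift_single η u g s)

end Lift

variable (ω 𝕜) in
/-- The inclusion of the constants. -/
def const : S →ₐ[𝕜] BeurlingAlgebra ω S where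
  toFun := single ω 0
  map_one' := Completion.coe_one _
  map_zero' := map_zero _
  map_mul' s t := by rw [single_mul_single, add_zero]
  map_add' := map_add _
  commutes' c := by rw [Completion.algebraMap_def]; rfl

/-- The inclusion of the monomials. -/
def monomial (ω : SubmultiplicativeWeight G) (S : Type*) [NormedCommRing S] :
    Multiplicative G →* BeurlingAlgebra ω S where
  toFun g := single ω g.toAdd 1
  map_one' := Completion.coe_one _
  map_mul' g h := by rw [single_mul_single, mul_one, toAdd_mul]

lemma const_mul_monomial (s : S) (g : G) :
    const 𝕜 ω s * monomial ω S (.ofAdd g) = single ω g s :=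
  (single_mul_single 0 g s 1).trans (by rw [zero_add, mul_one])

end AlgHom

section Restrict

variable (𝕜) [NormedField 𝕜] [NormedAlgebra 𝕜 S]

/-- The homomorphism to the Beurling algebra of a smaller weight, thought of as the restriction of
functions to a smaller domain. -/
def restrict (h : ∀ g, ω₂ g ≤ ω₁ g) : BeurlingAlgebra ω₁ S →ₐ[𝕜] BeurlingAlgebra ω₂ S :=
  lift (η := const 𝕜 ω₂) (u := monomial ω₂ S) fun g s => by
    rw [const_mul_monomial, norm_single]
    exact mul_le_mul_of_nonneg_right (h g) (norm_nonneg s)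

@[fun_prop]
lemma continuous_restrict (h : ∀ g, ω₂ g ≤ ω₁ g) : Continuous (restrict 𝕜 (S := S) h) :=
  continuous_lift _

lemma restrict_single (h : ∀ g, ω₂ g ≤ ω₁ g) (g : G) (s : S) :
    restrict 𝕜 h (single ω₁ g s) = single ω₂ g s := by
  rw [restrict, lift_single, const_mul_monomial]

open Classical in
/-- The truncation of a formal sum to its summands with degree in `D`. -/
def truncate {D : Set G} (h : ∀ g ∈ D, ω₂ g ≤ ω₁ g) :
    BeurlingAlgebra ω₁ S →+ BeurlingAlgebra ω₂ S :=
  liftAddHom (f := fun g => if g ∈ D then single ω₂ g else 0) fun g s => by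
    split_ifs with hg
    · rw [norm_single]
      exact mul_le_mul_of_nonneg_right (h g hg) (norm_nonneg s)
    · simpa using mul_nonneg (ω₁.nonneg g) (norm_nonneg s)

variable {D : Set G}

@[fun_prop]
lemma continuous_truncate (h : ∀ g ∈ D, ω₂ g ≤ ω₁ g) : Continuous (truncate (S := S) h) :=
  continuous_liftAddHom _

lemma truncate_single_of_mem (h : ∀ g ∈ D, ω₂ g ≤ ω₁ g) {g : G} (hg : g ∈ D) (s : S) :
    truncate h (single ω₁ g s) = single ω₂ g s := by
  rw [truncate, liftAddHom_single, if_pos hg]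

lemma truncate_single_of_notMem (h : ∀ g ∈ D, ω₂ g ≤ ω₁ g) {g : G} (hg : g ∉ D) (s : S) :
    truncate h (single ω₁ g s) = 0 := by
  rw [truncate, liftAddHom_single, if_neg hg, AddMonoidHom.zero_apply]

lemma restrict_truncate {ω₃ ω₄ : SubmultiplicativeWeight G} (h₁₂ : ∀ g ∈ D, ω₂ g ≤ ω₁ g)
    (h₂₄ : ∀ g, ω₄ g ≤ ω₂ g) (h₁₃ : ∀ g, ω₃ g ≤ ω₁ g) (h₃₄ : ∀ g ∈ D, ω₄ g ≤ ω₃ g)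
    (x : BeurlingAlgebra ω₁ S) :
    restrict 𝕜 h₂₄ (truncate h₁₂ x) = truncate h₃₄ (restrict 𝕜 h₁₃ x) := by
  induction x using induction with
  | closed => exact isClosed_eq (by fun_prop) (by fun_prop)
  | add x y hx hy => simp only [map_add, hx, hy]
  | single g s =>
    by_cases hg : g ∈ D
    · simp only [restrict_single, truncate_single_of_mem, hg]
    · simp only [restrict_single, truncate_single_of_notMem, hg, not_false_iff, map_zero]

lemma truncate_add_truncate_compl {ω₃ : SubmultiplicativeWeight G} (h : ∀ g, ω₃ g ≤ ω g)
    (h₁ : ∀ g, ω₁ g ≤ ω g) (h₂ : ∀ g, ω₂ g ≤ ω g) (h₁₃ : ∀ g ∈ D, ω₃ g ≤ ω₁ g)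
    (h₂₃ : ∀ g ∈ Dᶜ, ω₃ g ≤ ω₂ g) (x : BeurlingAlgebra ω S) :
    truncate h₁₃ (restrict 𝕜 h₁ x) + truncate h₂₃ (restrict 𝕜 h₂ x) = restrict 𝕜 h x := by
  induction x using induction with
  | closed => exact isClosed_eq (by fun_prop) (by fun_prop)
  | add x y hx hy => simp only [map_add, ← hx, ← hy]; abel
  | single g s =>
    by_cases hg : g ∈ D
    · rw [restrict_single, restrict_single, restrict_single, truncate_single_of_mem _ hg,
        truncate_single_of_notMem _ (notMem_compl_iff.2 hg), add_zero]
    · rw [restrict_single, restrict_single, restrict_single, truncate_single_of_notMem _ hg,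
        truncate_single_of_mem _ (mem_compl hg), zero_add]

lemma restrict_restrict {ω₃ : SubmultiplicativeWeight G} (h₁₂ : ∀ g, ω₂ g ≤ ω₁ g)
    (h₂₃ : ∀ g, ω₃ g ≤ ω₂ g) (x : BeurlingAlgebra ω₁ S) :
    restrict 𝕜 h₂₃ (restrict 𝕜 h₁₂ x) = restrict 𝕜 (fun g => (h₂₃ g).trans (h₁₂ g)) x := by
  induction x using induction with
  | closed => exact isClosed_eq (by fun_prop) (by fun_prop)
  | add x y hx hy => simp only [map_add, hx, hy]
  | single g s => simp only [restrict_single]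

lemma restrict_self (x : BeurlingAlgebra ω S) : restrict 𝕜 (fun g => le_refl (ω g)) x = x := by
  induction x using induction with
  | closed => exact isClosed_eq (by fun_prop) (by fun_prop)
  | add x y hx hy => rw [map_add, hx, hy]
  | single g s => exact restrict_single 𝕜 _ g s

/- A formal sum on the intersection is split into its summands with degree in `D`, which extend to
the first domain, and the others, which extend to the second. -/
theorem isCousinSquare_restrict {ωF ωA ωB ωZ : SubmultiplicativeWeight G}
    (hFA : ∀ g, ωA g ≤ ωF g) (hFB : ∀ g, ωB g ≤ ωF g) (hAZ : ∀ g, ωZ g ≤ ωA g)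
    (hBZ : ∀ g, ωZ g ≤ ωB g) (hZA : ∀ g ∈ D, ωA g ≤ ωZ g) (hBF : ∀ g ∈ D, ωF g ≤ ωB g)
    (hAF : ∀ g ∈ Dᶜ, ωF g ≤ ωA g) (hZB : ∀ g ∈ Dᶜ, ωB g ≤ ωZ g) :
    IsCousinSquare (restrict 𝕜 (S := S) hFA).toRingHom (restrict 𝕜 (S := S) hFB).toRingHom
      (restrict 𝕜 (S := S) hAZ).toRingHom (restrict 𝕜 (S := S) hBZ).toRingHom where
  comm x := by simp only [AlgHom.toRingHom_eq_coe, RingHom.coe_coe, restrict_restrict]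
  inj x hxA hxB := by
    simp only [AlgHom.toRingHom_eq_coe, RingHom.coe_coe] at hxA hxB
    rw [← restrict_self 𝕜 x, ← truncate_add_truncate_compl 𝕜 _ hFB hFA hBF hAF, hxA, hxB,
      map_zero, map_zero, add_zero]
  glue a b hab := by
    simp only [AlgHom.toRingHom_eq_coe, RingHom.coe_coe] at hab ⊢
    refine ⟨truncate hBF b + truncate hAF a, ?_, ?_⟩
    · rw [map_add, restrict_truncate 𝕜 hBF hFA hBZ hZA,
        restrict_truncate 𝕜 hAF hFA (fun _ => le_rfl) (fun _ _ => le_rfl), ← hab,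
        truncate_add_truncate_compl 𝕜 fun _ => le_rfl, restrict_self]
    · rw [map_add, restrict_truncate 𝕜 hAF hFB hAZ hZB,
        restrict_truncate 𝕜 hBF hFB (fun _ => le_rfl) (fun _ _ => le_rfl), hab,
        truncate_add_truncate_compl 𝕜 fun _ => le_rfl, restrict_self]
  split z := by
    refine ⟨truncate hZA z, -truncate hZB z, ?_⟩
    simp only [AlgHom.toRingHom_eq_coe, RingHom.coe_coe, map_neg, sub_neg_eq_add]
    rw [restrict_truncate 𝕜 hZA hAZ (fun _ => le_rfl) (fun _ _ => le_rfl),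
      restrict_truncate 𝕜 hZB hBZ (fun _ => le_rfl) (fun _ _ => le_rfl),
      truncate_add_truncate_compl 𝕜 fun _ => le_rfl, restrict_self]

end Restrict

end BeurlingAlgebra

end WeightedConvolution

section GraphAlgebra

open BeurlingAlgebra hiding restrict

variable {S T Q : Type*} [NormedCommRing S] [NormedAlgebra ℂ S] [NormedCommRing T]
  [NormedAlgebra ℂ T] [CommRing Q] [Algebra ℂ Q] {ω ω₁ ω₂ : SubmultiplicativeWeight ℤ}
  {I : Ideal S} {f : S}

variable (ω I f) in
/-- The ideal of Laurent series with coefficients in `S` that vanish on the graph `w = f` over the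
zero set of `I`. -/
def graphIdeal : Ideal (BeurlingAlgebra ω S) :=
  I.map (const ℂ ω).toRingHom ⊔ Ideal.span {monomial ω S (.ofAdd 1) - const ℂ ω f}

lemma graphIdeal_fg (hI : I.FG) : (graphIdeal ω I f).FG :=
  Submodule.FG.sup (hI.map _) (Submodule.fg_span_singleton _)

lemma map_restrict_graphIdeal (h : ∀ k, ω₂ k ≤ ω₁ k) :
    (graphIdeal ω₁ I f).map (BeurlingAlgebra.restrict ℂ (S := S) h).toRingHom =
      graphIdeal ω₂ I f := by
  set ρ := (BeurlingAlgebra.restrict ℂ (S := S) h).toRingHom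
  have hconst (s : S) : ρ (const ℂ ω₁ s) = const ℂ ω₂ s := restrict_single ℂ h 0 s
  have hmonomial : ρ (monomial ω₁ S (.ofAdd 1)) = monomial ω₂ S (.ofAdd 1) :=
    restrict_single ℂ h 1 1
  have hcomp : ρ.comp (const ℂ ω₁).toRingHom = (const ℂ (S := S) ω₂).toRingHom :=
    RingHom.ext hconst
  rw [graphIdeal, Ideal.map_sup, Ideal.map_map, hcomp, Ideal.map_span, image_singleton, map_sub,
    hmonomial, hconst, graphIdeal]

variable (ω I f) in
/-- The algebra of Laurent series modulo `graphIdeal`. Its characters are the characters of `S ⧸ I`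
at which the powers of `f` are bounded by the weight. -/
abbrev GraphAlgebra : Type _ := BeurlingAlgebra ω S ⧸ graphIdeal ω I f

namespace GraphAlgebra

variable (ω I f) in
/-- The inclusion of the constants. -/
def ofBase : S ⧸ I →ₐ[ℂ] GraphAlgebra ω I f :=
  Ideal.quotientMapₐ _ (const ℂ ω) (Ideal.map_le_iff_le_comap.1 le_sup_left)

variable (I f) in
/-- The restriction of functions to a smaller domain. -/
def restrict (h : ∀ k, ω₂ k ≤ ω₁ k) : GraphAlgebra ω₁ I f →ₐ[ℂ] GraphAlgebra ω₂ I f :=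
  Ideal.quotientMapₐ _ (BeurlingAlgebra.restrict ℂ h)
    (Ideal.map_le_iff_le_comap.1 (map_restrict_graphIdeal h).le)

lemma restrict_eq_quotientMap (h : ∀ k, ω₂ k ≤ ω₁ k) (x : GraphAlgebra ω₁ I f) :
    restrict I f h x = Ideal.quotientMap _ (BeurlingAlgebra.restrict ℂ h).toRingHom
      (Ideal.map_le_iff_le_comap.1 (map_restrict_graphIdeal h).le) x := rfl

lemma restrict_comp_ofBase (h : ∀ k, ω₂ k ≤ ω₁ k) :
    (restrict I f h).comp (ofBase ω₁ I f) = ofBase ω₂ I f :=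
  Ideal.Quotient.algHom_ext _ <| AlgHom.ext fun s =>
    congrArg (Ideal.Quotient.mk _) (restrict_single ℂ h 0 s)

lemma mk_monomial_one :
    Ideal.Quotient.mk (graphIdeal ω I f) (monomial ω S (.ofAdd 1)) =
      ofBase ω I f (Ideal.Quotient.mk I f) :=
  Ideal.Quotient.eq.2 (Ideal.mem_sup_right (Ideal.mem_span_singleton_self _))

lemma norm_apply_ofBase_zpow_le [NormOneClass S] (χ : GraphAlgebra ω I f →ₐ[ℂ] ℂ) (k : ℤ) :
    ‖χ (ofBase ω I f (Ideal.Quotient.mk I f))‖ ^ k ≤ ω k := by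
  set χ' : BeurlingAlgebra ω S →ₐ[ℂ] ℂ := χ.comp (Ideal.Quotient.mkₐ ℂ _)
  have hw : χ' (monomial ω S (.ofAdd 1)) = χ (ofBase ω I f (Ideal.Quotient.mk I f)) :=
    congrArg χ mk_monomial_one
  have hzpow : χ' (monomial ω S (.ofAdd k)) = χ' (monomial ω S (.ofAdd 1)) ^ k := by
    simpa using congrArg Units.val
      (MonoidHom.apply_mint ℂˣ ((χ' : _ →* ℂ).comp (monomial ω S)).toHomUnits (.ofAdd k))
  calc ‖χ (ofBase ω I f (Ideal.Quotient.mk I f))‖ ^ k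
      = ‖χ' (monomial ω S (.ofAdd k))‖ := by rw [hzpow, hw, norm_zpow]
    _ ≤ ‖monomial ω S (.ofAdd k)‖ := AlgHom.norm_apply_le_self χ' _
    _ = ω k := (norm_single k 1).trans (by rw [norm_one, mul_one])

lemma algHom_ext {χ χ' : GraphAlgebra ω I f →ₐ[ℂ] ℂ}
    (h : χ.comp (ofBase ω I f) = χ'.comp (ofBase ω I f)) : χ = χ' := by
  refine Ideal.Quotient.algHom_ext _ (AlgHom.ext fun x => ?_)
  set ψ := χ.comp (Ideal.Quotient.mkₐ ℂ (graphIdeal ω I f))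
  set ψ' := χ'.comp (Ideal.Quotient.mkₐ ℂ (graphIdeal ω I f))
  have hconst (s : S) : ψ (const ℂ ω s) = ψ' (const ℂ ω s) :=
    DFunLike.congr_fun h (Ideal.Quotient.mk I s)
  have hψ : ψ (monomial ω S (.ofAdd 1)) = ψ (const ℂ ω f) := congrArg χ mk_monomial_one
  have hψ' : ψ' (monomial ω S (.ofAdd 1)) = ψ' (const ℂ ω f) := congrArg χ' mk_monomial_one
  have hmonomial (k : Multiplicative ℤ) : ψ (monomial ω S k) = ψ' (monomial ω S k) :=
    DFunLike.congr_fun (F := Multiplicative ℤ →* ℂ)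
      (f := (ψ : BeurlingAlgebra ω S →* ℂ).comp (monomial ω S))
      (g := (ψ' : BeurlingAlgebra ω S →* ℂ).comp (monomial ω S))
      (MonoidHom.ext_mint (hψ.trans ((hconst f).trans hψ'.symm))) k
  induction x using BeurlingAlgebra.induction with
  | closed =>
    have hcont (θ : BeurlingAlgebra ω S →ₐ[ℂ] ℂ) : Continuous θ := map_continuous θ
    exact isClosed_eq (hcont ψ) (hcont ψ')
  | add x y hx hy => rw [map_add, map_add, hx, hy]
  | single k s =>
    rw [← const_mul_monomial (𝕜 := ℂ), map_mul, map_mul, hconst, hmonomial]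

lemma exists_algHom_ofBase [CompleteSpace T] {f : Sˣ} {η : S →ₐ[ℂ] T} (hη : ∀ s, ‖η s‖ ≤ ‖s‖)
    (hf : ∀ k : ℤ, ‖((Units.map (η : S →* T) f ^ k : Tˣ) : T)‖ ≤ ω k) {ψ : T →ₐ[ℂ] Q}
    (hψ : ∀ s ∈ I, ψ (η s) = 0) :
    ∃ χ : GraphAlgebra ω I (f : S) →ₐ[ℂ] Q,
      ∀ s, χ (ofBase ω I f (Ideal.Quotient.mk I s)) = ψ (η s) := by
  set g : Tˣ := Units.map (η : S →* T) f
  have hg (k : ℤ) (s : S) :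
      ‖η s * (Units.coeHom T).comp (zpowersHom Tˣ g) (.ofAdd k)‖ ≤ ω k * ‖s‖ := by
    rw [mul_comm (ω k)]
    exact (norm_mul_le _ _).trans (mul_le_mul (hη s) (hf k) (norm_nonneg _) (norm_nonneg _))
  have hconst (s : S) : lift hg (const ℂ ω s) = η s := (lift_single hg 0 s).trans <| by
    rw [ofAdd_zero, map_one, mul_one]
  have hmonomial : lift hg (monomial ω S (.ofAdd 1)) = η f :=
    (lift_single hg 1 1).trans <| by simp [g]
  have hker : graphIdeal ω I f ≤ RingHom.ker (ψ.comp (lift hg)) := by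
    refine sup_le (Ideal.map_le_iff_le_comap.2 fun s hs => ?_) (Ideal.span_le.2 ?_)
    · exact (congrArg ψ (hconst s)).trans (hψ s hs)
    · simp [hconst, hmonomial]
  exact ⟨Ideal.Quotient.liftₐ _ (ψ.comp (lift hg)) hker, fun s => congrArg ψ (hconst s)⟩

lemma exists_comp_ofBase_eq_id [CompleteSpace S] (I : Ideal S) {f : Sˣ}
    (hf : ∀ k : ℤ, ‖((f ^ k : Sˣ) : S)‖ ≤ ω k) :
    ∃ ev : GraphAlgebra ω I (f : S) →ₐ[ℂ] S ⧸ I, ev.comp (ofBase ω I f) = AlgHom.id ℂ _ := by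
  obtain ⟨ev, hev⟩ := exists_algHom_ofBase (η := AlgHom.id ℂ S) (fun _ => le_rfl) hf
    (ψ := Ideal.Quotient.mkₐ ℂ I) fun s hs => Ideal.Quotient.eq_zero_iff_mem.2 hs
  exact ⟨ev, Ideal.Quotient.algHom_ext _ (AlgHom.ext hev)⟩

lemma exists_comp_ofBase_eq [CompleteSpace S] [NormOneClass S] {f : Sˣ} (φ : S ⧸ I →ₐ[ℂ] ℂ)
    (hf : ∀ k : ℤ, ‖φ (Ideal.Quotient.mk I f)‖ ^ k ≤ ω k) :
    ∃ χ : GraphAlgebra ω I (f : S) →ₐ[ℂ] ℂ, χ.comp (ofBase ω I f) = φ := by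
  obtain ⟨χ, hχ⟩ := exists_algHom_ofBase (f := f) (ω := ω) (I := I)
    (η := φ.comp (Ideal.Quotient.mkₐ ℂ I)) (fun s => AlgHom.norm_apply_le_self _ s)
    (fun k => by simpa using hf k) (ψ := AlgHom.id ℂ ℂ) fun s hs => by
      simp [Ideal.Quotient.eq_zero_iff_mem.2 hs]
  exact ⟨χ, Ideal.Quotient.algHom_ext _ (AlgHom.ext hχ)⟩

end GraphAlgebra

end GraphAlgebra

section AnnulusWeight

variable {r c R : {x : ℝ // 0 < x}}

/-- The supremum of `|w ^ k|` over the annulus `r ≤ |w| ≤ R`. -/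
def annulusWeight (r R : {x : ℝ // 0 < x}) : SubmultiplicativeWeight ℤ where
  toFun k := max ((r : ℝ) ^ k) ((R : ℝ) ^ k)
  nonneg k := le_max_of_le_left (zpow_nonneg r.2.le k)
  map_zero := by rw [zpow_zero, zpow_zero, max_self]
  map_add_le_mul k l := by
    have hr := zpow_nonneg r.2.le
    rw [zpow_add₀ r.2.ne', zpow_add₀ R.2.ne']
    exact max_le (mul_le_mul (le_max_left ..) (le_max_left ..) (hr l) (le_max_of_le_left (hr k)))
      (mul_le_mul (le_max_right ..) (le_max_right ..) (zpow_nonneg R.2.le l)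
        (le_max_of_le_left (hr k)))

lemma norm_zpow_le_annulusWeight {T : Type*} [NormedRing T] [NormOneClass T] {u : Tˣ}
    (hR : ‖(u : T)‖ ≤ R) (hr : ‖((u⁻¹ : Tˣ) : T)‖ ≤ (r : ℝ)⁻¹) (k : ℤ) :
    ‖((u ^ k : Tˣ) : T)‖ ≤ annulusWeight r R k := by
  obtain ⟨m, rfl | rfl⟩ := k.eq_nat_or_neg
  · rw [zpow_natCast, Units.val_pow_eq_pow_val]
    refine le_max_of_le_right ((norm_pow_le _ m).trans ?_)
    rw [zpow_natCast]
    exact pow_le_pow_left₀ (norm_nonneg _) hR m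
  · rw [zpow_neg, ← inv_zpow, zpow_natCast, Units.val_pow_eq_pow_val]
    refine le_max_of_le_left ((norm_pow_le _ m).trans ?_)
    rw [zpow_neg, ← inv_zpow, zpow_natCast]
    exact pow_le_pow_left₀ (norm_nonneg _) hr m

lemma zpow_le_annulusWeight {x : ℝ} (hr : r ≤ x) (hR : x ≤ R) (k : ℤ) :
    x ^ k ≤ annulusWeight r R k := by
  have hx : 0 < x := r.2.trans_le hr
  simpa [abs_of_pos hx] using norm_zpow_le_annulusWeight (r := r) (R := R) (u := Units.mk0 x hx.ne')
    (by simpa [abs_of_pos hx]) (by simpa [abs_of_pos hx] using inv_anti₀ r.2 hr) k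

lemma annulusWeight_le {r' R' : {x : ℝ // 0 < x}} (hr : r ≤ r') (h : r' ≤ R') (hR : R' ≤ R)
    (k : ℤ) : annulusWeight r' R' k ≤ annulusWeight r R k :=
  max_le (zpow_le_annulusWeight hr (h.trans hR) k) (zpow_le_annulusWeight (hr.trans h) hR k)

lemma annulusWeight_of_nonneg (h : r ≤ R) {k : ℤ} (hk : 0 ≤ k) :
    annulusWeight r R k = (R : ℝ) ^ k :=
  max_eq_right (zpow_le_zpow_left₀ hk r.2.le h)

lemma annulusWeight_of_nonpos (h : r ≤ R) {k : ℤ} (hk : k ≤ 0) :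
    annulusWeight r R k = (r : ℝ) ^ k :=
  max_eq_left <| by
    simpa using inv_anti₀ (zpow_pos r.2 (-k)) (zpow_le_zpow_left₀ (neg_nonneg.2 hk) r.2.le h)

lemma le_and_le_of_zpow_le_annulusWeight (h : r ≤ R) {x : ℝ} (hx : 0 < x)
    (hle : ∀ k : ℤ, x ^ k ≤ annulusWeight r R k) : r ≤ x ∧ x ≤ R := by
  have h₁ := hle 1
  have h₂ := hle (-1)
  rw [annulusWeight_of_nonneg h zero_le_one, zpow_one, zpow_one] at h₁
  rw [annulusWeight_of_nonpos h (by lia), zpow_neg_one, zpow_neg_one, inv_le_inv₀ hx r.2] at h₂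
  exact ⟨h₂, h₁⟩

lemma isCousinSquare_restrict_annulusWeight (S : Type*) [NormedCommRing S] [NormedAlgebra ℂ S]
    (hr : r ≤ c) (hR : c ≤ R) :
    IsCousinSquare
      (BeurlingAlgebra.restrict ℂ (S := S) (annulusWeight_le le_rfl hr hR)).toRingHom
      (BeurlingAlgebra.restrict ℂ (S := S) (annulusWeight_le hr hR le_rfl)).toRingHom
      (BeurlingAlgebra.restrict ℂ (S := S) (annulusWeight_le hr le_rfl le_rfl)).toRingHom
      (BeurlingAlgebra.restrict ℂ (S := S) (annulusWeight_le le_rfl le_rfl hR)).toRingHom := by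
  refine BeurlingAlgebra.isCousinSquare_restrict ℂ (D := {k | 0 ≤ k}) _ _ _ _ ?_ ?_ ?_ ?_ <;>
    intro k hk <;> simp only [mem_ofPred_eq, mem_compl_iff, not_le] at hk
  · rw [annulusWeight_of_nonneg hr hk, annulusWeight_of_nonneg le_rfl hk]
  · rw [annulusWeight_of_nonneg (hr.trans hR) hk, annulusWeight_of_nonneg hR hk]
  · rw [annulusWeight_of_nonpos (hr.trans hR) hk.le, annulusWeight_of_nonpos hr hk.le]
  · rw [annulusWeight_of_nonpos hR hk.le, annulusWeight_of_nonpos le_rfl hk.le]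

end AnnulusWeight

section IndicatorElem

variable {S : Type*} [NormedCommRing S] [NormedAlgebra ℂ S] {I : Ideal S}

open GraphAlgebra

lemma exists_isIdempotentElem_restrict_eq (hI : I.FG) {f : S} {r c R : {x : ℝ // 0 < x}}
    (hr : r ≤ c) (hR : c ≤ R) {a : GraphAlgebra (annulusWeight r c) I f}
    {b : GraphAlgebra (annulusWeight c R) I f} (ha : IsIdempotentElem a) (hb : IsIdempotentElem b)
    (hab : GraphAlgebra.restrict I f (annulusWeight_le hr le_rfl le_rfl) a =
      GraphAlgebra.restrict I f (annulusWeight_le le_rfl le_rfl hR) b) :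
    ∃ e : GraphAlgebra (annulusWeight r R) I f, IsIdempotentElem e ∧
      GraphAlgebra.restrict I f (annulusWeight_le le_rfl hr hR) e = a ∧
      GraphAlgebra.restrict I f (annulusWeight_le hr hR le_rfl) e = b := by
  simp only [restrict_eq_quotientMap] at hab ⊢
  exact (isCousinSquare_restrict_annulusWeight S hr hR).exists_isIdempotentElem_quotient
    (graphIdeal_fg hI) (map_restrict_graphIdeal _) (map_restrict_graphIdeal _)
    (map_restrict_graphIdeal _) _ ha hb hab

/- An element `a` over `r ≤ |w| ≤ c` and an element `b` over `c ≤ |w| ≤ R` agree over `|w| = c`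
because they have the same Gelfand transform there. The graph of `f` is covered by the two pieces,
so the glued idempotent descends from the annulus `r ≤ |w| ≤ R` to the base. -/
lemma exists_isIndicatorElem_of_graphAlgebra [NormOneClass S] [CompleteSpace S] (hI : I.FG)
    {Φ : Set (S ⧸ I →ₐ[ℂ] ℂ)} {f : Sˣ} {r c R : {x : ℝ // 0 < x}} (hrc : r ≤ c) (hcR : c ≤ R)
    (hr : ‖((f⁻¹ : Sˣ) : S)‖ ≤ (r : ℝ)⁻¹) (hR : ‖(f : S)‖ ≤ R)
    {a : GraphAlgebra (annulusWeight r c) I (f : S)}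
    {b : GraphAlgebra (annulusWeight c R) I (f : S)}
    (ha : IsIndicatorElem a ((fun χ => χ.comp (ofBase _ I (f : S))) ⁻¹' Φ))
    (hb : IsIndicatorElem b ((fun χ => χ.comp (ofBase _ I (f : S))) ⁻¹' Φ)) :
    ∃ e : S ⧸ I, IsIndicatorElem e Φ := by
  have hab : GraphAlgebra.restrict I (f : S) (annulusWeight_le hrc le_rfl le_rfl) a =
      GraphAlgebra.restrict I (f : S) (annulusWeight_le le_rfl le_rfl hcR) b :=
    (ha.map_of_comp_eq (restrict_comp_ofBase _)).unique
      (hb.map_of_comp_eq (restrict_comp_ofBase _))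
  obtain ⟨e, he, rfl, rfl⟩ := exists_isIdempotentElem_restrict_eq hI hrc hcR ha.isIdempotentElem
    hb.isIdempotentElem hab
  obtain ⟨ev, hev⟩ := exists_comp_ofBase_eq_id I (norm_zpow_le_annulusWeight hR hr)
  have happly {ω : SubmultiplicativeWeight ℤ} (h : ∀ k, ω k ≤ annulusWeight r R k)
      (hi : IsIndicatorElem (GraphAlgebra.restrict I (f : S) h e)
        ((fun χ => χ.comp (ofBase _ I (f : S))) ⁻¹' Φ)) (φ : S ⧸ I →ₐ[ℂ] ℂ)
      (hφ : ∀ k : ℤ, ‖φ (Ideal.Quotient.mk I f)‖ ^ k ≤ ω k) : φ (ev e) = Φ.indicator 1 φ := by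
    obtain ⟨χ, rfl⟩ := exists_comp_ofBase_eq φ hφ
    have hχ : (χ.comp (ofBase ω I (f : S))).comp ev = χ.comp (GraphAlgebra.restrict I (f : S) h) :=
      algHom_ext (by rw [AlgHom.comp_assoc, hev, AlgHom.comp_id, AlgHom.comp_assoc,
        restrict_comp_ofBase])
    exact (DFunLike.congr_fun hχ e).trans (hi.apply_eq χ)
  refine ⟨ev e, he.map ev, fun φ => ?_⟩
  have hf : ∀ k : ℤ, ‖φ (Ideal.Quotient.mk I f)‖ ^ k ≤ annulusWeight r R k := fun k => by
    have h := norm_apply_ofBase_zpow_le (φ.comp ev) k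
    rwa [AlgHom.comp_apply, ← AlgHom.comp_apply ev, hev] at h
  have hpos : 0 < ‖φ (Ideal.Quotient.mk I f)‖ :=
    norm_pos_iff.2 ((f.isUnit.map (Ideal.Quotient.mk I)).map φ).ne_zero
  obtain ⟨hrf, hfR⟩ := le_and_le_of_zpow_le_annulusWeight (hrc.trans hcR) hpos hf
  rcases le_total ‖φ (Ideal.Quotient.mk I f)‖ c with hfc | hcf
  · exact happly _ ha φ (zpow_le_annulusWeight hrf hfc)
  · exact happly _ hb φ (zpow_le_annulusWeight hcf hfR)

theorem exists_isIndicatorElem_of_separating {S : Type*} [NormedCommRing S] [NormedAlgebra ℂ S]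
    [NormOneClass S] [CompleteSpace S] {I : Ideal S} (hI : I.FG) {Φ : Set (S ⧸ I →ₐ[ℂ] ℂ)}
    (fs : List Sˣ) (hfs : ∀ φ ∈ Φ, ∀ ψ ∉ Φ, ∃ f ∈ fs,
      ‖φ (Ideal.Quotient.mk I f)‖ < 1 ∧ 1 < ‖ψ (Ideal.Quotient.mk I f)‖) :
    ∃ e : S ⧸ I, IsIndicatorElem e Φ := by
  match fs with
  | [] =>
    rcases Φ.eq_empty_or_nonempty with rfl | ⟨φ, hφ⟩
    · exact ⟨0, .zero, fun χ => by simp⟩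
    · have hΦ : Φ = univ := eq_univ_of_forall fun ψ => by
        by_contra hψ
        simpa using hfs φ hφ ψ hψ
      exact ⟨1, .one, fun χ => by simp [hΦ]⟩
  | f :: fs =>
    have exists_over (ω : SubmultiplicativeWeight ℤ)
        (hω : ∀ χ χ' : GraphAlgebra ω I (f : S) →ₐ[ℂ] ℂ,
          1 ≤ ‖χ (ofBase ω I f (Ideal.Quotient.mk I f))‖ ∨
            ‖χ' (ofBase ω I f (Ideal.Quotient.mk I f))‖ ≤ 1) :
        ∃ a, IsIndicatorElem a ((fun χ => χ.comp (ofBase ω I (f : S))) ⁻¹' Φ) := by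
      refine exists_isIndicatorElem_of_separating (graphIdeal_fg hI)
        (fs.map (Units.map (BeurlingAlgebra.const (S := S) ℂ ω : S →* BeurlingAlgebra ω S)))
        fun χ hχ χ' hχ' => ?_
      obtain ⟨g, hg, hlt⟩ := hfs _ hχ _ hχ'
      rcases List.mem_cons.1 hg with rfl | hg
      · exact ((hω χ χ').elim hlt.1.not_ge hlt.2.not_ge).elim
      · exact ⟨_, List.mem_map_of_mem hg, hlt⟩
    set r : {x : ℝ // 0 < x} := ⟨(max 1 ‖((f⁻¹ : Sˣ) : S)‖)⁻¹, by positivity⟩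
    set R : {x : ℝ // 0 < x} := ⟨max 1 ‖(f : S)‖, by positivity⟩
    have hr : r ≤ 1 := Subtype.coe_le_coe.1 (inv_le_one_of_one_le₀ (le_max_left ..))
    have hR : 1 ≤ R := Subtype.coe_le_coe.1 (le_max_left 1 ‖(f : S)‖)
    have hpos (ω : SubmultiplicativeWeight ℤ) (χ : GraphAlgebra ω I (f : S) →ₐ[ℂ] ℂ) :
        0 < ‖χ (ofBase ω I f (Ideal.Quotient.mk I f))‖ :=
      norm_pos_iff.2 (((f.isUnit.map (Ideal.Quotient.mk I)).map (ofBase ω I f)).map χ).ne_zero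
    obtain ⟨a, ha⟩ := exists_over (annulusWeight r 1) fun _ χ => .inr
      (le_and_le_of_zpow_le_annulusWeight hr (hpos _ χ) (norm_apply_ofBase_zpow_le χ)).2
    obtain ⟨b, hb⟩ := exists_over (annulusWeight 1 R) fun χ _ => .inl
      (le_and_le_of_zpow_le_annulusWeight hR (hpos _ χ) (norm_apply_ofBase_zpow_le χ)).1
    exact exists_isIndicatorElem_of_graphAlgebra hI hr hR (by simp [r]) (le_max_right ..) ha hb
termination_by fs.length

end IndicatorElem

section ShilovIdempotent

variable {S : Type*} [NormedCommRing S] [NormedAlgebra ℂ S] [CompleteSpace S]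

lemma exists_unit_norm_apply_eq_exp_re [NormOneClass S] (x : S) :
    ∃ u : Sˣ, ∀ φ : S →ₐ[ℂ] ℂ, ‖φ u‖ = Real.exp (φ x).re := by
  let : NormedAlgebra ℚ S := NormedAlgebra.restrictScalars ℚ ℂ S
  obtain ⟨u, hu⟩ := NormedSpace.isUnit_exp x
  refine ⟨u, fun φ => ?_⟩
  have hcont : Continuous φ := map_continuous φ
  rw [hu, NormedSpace.map_exp φ hcont, ← Complex.exp_eq_exp_ℂ, Complex.norm_exp]

lemma exists_apply_eq_neg_one_and_apply_eq_one {F A : Type*} [Field F] [Ring A]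
    [Algebra F A] {φ ψ : A →ₐ[F] F} (h : φ ≠ ψ) : ∃ x, φ x = -1 ∧ ψ x = 1 := by
  obtain ⟨y, hy⟩ := DFunLike.ne_iff.1 h
  have hy' : ψ y - φ y ≠ 0 := sub_ne_zero.2 hy.symm
  refine ⟨(ψ y - φ y)⁻¹ • (2 * y - algebraMap F A (φ y + ψ y)), ?_, ?_⟩ <;>
  · simp only [map_smul, map_sub, map_mul, map_ofNat, AlgHom.commutes,
      Algebra.algebraMap_self_apply,
      smul_eq_mul]
    field_simp
    ring

open WeakDual

lemma exists_finset_units_separating [NormOneClass S] {E : Set (characterSpace ℂ S)}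
    (hE : IsClopen E) :
    ∃ fs : Finset Sˣ, ∀ φ ∈ E, ∀ ψ ∉ E, ∃ f ∈ fs, ‖φ (f : S)‖ < 1 ∧ 1 < ‖ψ (f : S)‖ := by
  have heval (f : S) : Continuous fun φ : characterSpace ℂ S => ‖φ f‖ :=
    ((eval_continuous f).comp continuous_subtype_val).norm
  obtain ⟨fs, hfs⟩ := (hE.1.isCompact.prod hE.2.isClosed_compl.isCompact).elim_finite_subcover
    (fun f : Sˣ => {φ | ‖φ (f : S)‖ < 1} ×ˢ {ψ | 1 < ‖ψ (f : S)‖})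
    (fun f => (isOpen_lt (heval f) continuous_const).prod (isOpen_lt continuous_const (heval f)))
    fun ⟨φ, ψ⟩ ⟨hφ, hψ⟩ => by
      have hne : CharacterSpace.equivAlgHom φ ≠ CharacterSpace.equivAlgHom ψ :=
        CharacterSpace.equivAlgHom.injective.ne (ne_of_mem_of_not_mem hφ hψ)
      obtain ⟨x, hxφ, hxψ⟩ := exists_apply_eq_neg_one_and_apply_eq_one hne
      obtain ⟨u, hu⟩ := exists_unit_norm_apply_eq_exp_re x
      refine mem_iUnion.2 ⟨u, (hu (CharacterSpace.equivAlgHom φ)).trans_lt ?_,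
        (hu (CharacterSpace.equivAlgHom ψ)).trans_gt ?_⟩ <;> simp [hxφ, hxψ]
  refine ⟨fs, fun φ hφ ψ hψ => ?_⟩
  obtain ⟨f, hf, hφψ⟩ := mem_iUnion₂.1 (hfs (mk_mem_prod hφ hψ))
  exact ⟨f, hf, hφψ⟩

theorem exists_isIdempotentElem_apply_eq_indicator [NormOneClass S]
    {E : Set (characterSpace ℂ S)} (hE : IsClopen E) :
    ∃ e : S, IsIdempotentElem e ∧ ∀ φ : characterSpace ℂ S, φ e = E.indicator 1 φ := by
  obtain ⟨fs, hfs⟩ := exists_finset_units_separating hE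
  set ι : S →ₐ[ℂ] S ⧸ (⊥ : Ideal S) := Ideal.Quotient.mkₐ ℂ ⊥
  obtain ⟨e, he⟩ := exists_isIndicatorElem_of_separating (I := (⊥ : Ideal S)) Submodule.fg_bot
    (Φ := (fun φ => CharacterSpace.equivAlgHom.symm (φ.comp ι)) ⁻¹' E) fs.toList
    fun φ hφ ψ hψ => (hfs _ hφ _ hψ).imp fun f hf => ⟨Finset.mem_toList.2 hf.1, hf.2⟩
  have he' := he.map (AlgEquiv.quotientBot ℂ S : S ⧸ (⊥ : Ideal S) →ₐ[ℂ] S)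
  exact ⟨_, he'.isIdempotentElem, fun φ => he'.apply_eq (CharacterSpace.equivAlgHom φ)⟩

end ShilovIdempotent

section PolynomialHull

open Bornology WeakDual

variable {n : ℕ} {K L : Set (EuclideanSpace ℂ (Fin n))}

lemma bddAbove_norm_eval (hK : IsBounded K) (p : MvPolynomial (Fin n) ℂ) :
    BddAbove ((fun w => ‖eval (fun i => w i) p‖) '' K) := by
  have hcont : Continuous fun x : EuclideanSpace ℂ (Fin n) => eval (fun i => x i) p :=
    p.continuous_eval.comp (by fun_prop)
  exact (hK.isCompact_closure.bddAbove_image hcont.norm.continuousOn).mono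
    (image_mono subset_closure)

lemma subset_polyHull (hK : IsBounded K) : K ⊆ polyHull K :=
  fun _ hx p => le_csSup (bddAbove_norm_eval hK p) (mem_image_of_mem _ hx)

lemma sSup_norm_eval_nonneg (K : Set (EuclideanSpace ℂ (Fin n))) (p : MvPolynomial (Fin n) ℂ) :
    0 ≤ sSup ((fun w => ‖eval (fun i => w i) p‖) '' K) :=
  Real.sSup_nonneg (forall_mem_image.2 fun _ _ => norm_nonneg _)

lemma polyHull_mono (hL : IsBounded L) (h : K ⊆ L) : polyHull K ⊆ polyHull L := fun _ hz p =>
  (hz p).trans <| Real.sSup_le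
    (forall_mem_image.2 fun _ hx => subset_polyHull hL (h hx) p) (sSup_norm_eval_nonneg L p)

variable (K) in
/-- The restriction of polynomials to `K`. -/
def polyRestrict : MvPolynomial (Fin n) ℂ →ₐ[ℂ] C(K, ℂ) :=
  aeval fun i => ⟨fun x => (x : EuclideanSpace ℂ (Fin n)) i, by fun_prop⟩

lemma polyRestrict_apply (p : MvPolynomial (Fin n) ℂ) (x : K) :
    polyRestrict K p x = eval (fun i => (x : EuclideanSpace ℂ (Fin n)) i) p := by
  refine (comp_aeval_apply _ (ContinuousMap.evalAlgHom ℂ ℂ x) p).trans ?_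
  rw [aeval_eq_eval]
  rfl

variable (K) in
/-- The algebra `P(K)` of uniform limits of polynomials on `K`. -/
def polyAlgebra [CompactSpace K] : Subalgebra ℂ C(K, ℂ) :=
  (polyRestrict K).range.topologicalClosure

variable [CompactSpace K]

lemma polyRestrict_mem_polyAlgebra (p : MvPolynomial (Fin n) ℂ) :
    polyRestrict K p ∈ polyAlgebra K :=
  Subalgebra.le_topologicalClosure _ ⟨p, rfl⟩

instance : CompleteSpace (polyAlgebra K) :=
  (Subalgebra.isClosed_topologicalClosure _).completeSpace_coe

instance [Nonempty K] : NormOneClass (polyAlgebra K) :=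
  ⟨norm_one (α := C(K, ℂ))⟩

lemma norm_apply_le_of_mem_polyHull (hLK : L ⊆ K) {z : K}
    (hz : (z : EuclideanSpace ℂ (Fin n)) ∈ polyHull L) {g : C(K, ℂ)} (hg : g ∈ polyAlgebra K)
    {c : ℝ} (hc : 0 ≤ c) (hgc : ∀ w : K, (w : EuclideanSpace ℂ (Fin n)) ∈ L → ‖g w‖ ≤ c) :
    ‖g z‖ ≤ c := by
  refine le_of_forall_pos_le_add fun ε hε => ?_
  obtain ⟨_, ⟨p, rfl⟩, hp⟩ := Metric.mem_closure_iff.1 hg (ε / 2) (half_pos hε)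
  have hclose (w : K) : ‖g w - polyRestrict K p w‖ ≤ ε / 2 :=
    (dist_eq_norm (g w) _).ge.trans ((ContinuousMap.dist_apply_le_dist w).trans hp.le)
  have hpL : ‖polyRestrict K p z‖ ≤ c + ε / 2 := by
    rw [polyRestrict_apply]
    refine (hz p).trans (Real.sSup_le (forall_mem_image.2 fun w hw => ?_) (by positivity))
    rw [← polyRestrict_apply p ⟨w, hLK hw⟩]
    exact (norm_le_norm_add_norm_sub (g ⟨w, hLK hw⟩) _).trans
      (add_le_add (hgc ⟨w, hLK hw⟩ hw) (hclose _))
  calc ‖g z‖ ≤ ‖polyRestrict K p z‖ + ‖g z - polyRestrict K p z‖ := norm_le_norm_add_norm_sub' _ _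
    _ ≤ c + ε := by linarith [hclose z]

/-- The point of `ℂⁿ` at which a character of `P(K)` evaluates polynomials. -/
def characterPoint (φ : characterSpace ℂ (polyAlgebra K)) : EuclideanSpace ℂ (Fin n) :=
  WithLp.toLp 2 fun i => φ ⟨polyRestrict K (X i), polyRestrict_mem_polyAlgebra _⟩

lemma continuous_characterPoint :
    Continuous (characterPoint : characterSpace ℂ (polyAlgebra K) → _) :=
  (PiLp.continuous_toLp 2 _).comp <| continuous_pi fun _ =>
    (eval_continuous _).comp continuous_subtype_val

lemma eval_characterPoint (φ : characterSpace ℂ (polyAlgebra K)) (p : MvPolynomial (Fin n) ℂ) :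
    eval (fun i => characterPoint φ i) p =
      φ ⟨polyRestrict K p, polyRestrict_mem_polyAlgebra p⟩ := by
  set ρ := (polyRestrict K).codRestrict (polyAlgebra K) polyRestrict_mem_polyAlgebra
  have h : aeval (fun i => characterPoint φ i) = (CharacterSpace.equivAlgHom φ).comp ρ :=
    algHom_ext fun i => aeval_X _ i
  rw [← aeval_eq_eval]
  exact DFunLike.congr_fun h p

lemma characterPoint_mem_polyHull [Nonempty K] (φ : characterSpace ℂ (polyAlgebra K)) :
    characterPoint φ ∈ polyHull K := fun p => by
  rw [eval_characterPoint]
  refine (AlgHom.norm_apply_le_self (CharacterSpace.equivAlgHom φ) _).trans ?_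
  refine (ContinuousMap.norm_le _ (sSup_norm_eval_nonneg K p)).2 fun x => ?_
  exact (congrArg norm (polyRestrict_apply p x)).trans_le
    (subset_polyHull (isCompact_iff_compactSpace.2 ‹_›).isBounded x.2 p)

lemma exists_characterPoint_eq (x : K) :
    ∃ φ : characterSpace ℂ (polyAlgebra K), characterPoint φ = x ∧
      ∀ g : polyAlgebra K, φ g = g.1 x :=
  ⟨CharacterSpace.equivAlgHom.symm
    ((ContinuousMap.evalAlgHom ℂ ℂ x).comp (polyAlgebra K).val),
    PiLp.ext fun i => (polyRestrict_apply _ x).trans (eval_X i), fun _ => rfl⟩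

variable {K₁ K₂ : Set (EuclideanSpace ℂ (Fin n))}

theorem exists_mem_polyAlgebra_eq_indicator [CompactSpace ↥(K₁ ∪ K₂)] (hK₁ : IsClosed K₁)
    (hK₂ : IsClosed K₂) (hdisj : Disjoint K₁ K₂) (hpc : IsPolyConvex (K₁ ∪ K₂)) :
    ∃ e ∈ polyAlgebra (K₁ ∪ K₂), ∀ x : ↥(K₁ ∪ K₂), e x = K₁.indicator 1 x.1 := by
  rcases isEmpty_or_nonempty ↥(K₁ ∪ K₂) with _ | _
  · exact ⟨0, zero_mem _, isEmptyElim⟩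
  have hcover (φ : characterSpace ℂ (polyAlgebra (K₁ ∪ K₂))) : characterPoint φ ∈ K₁ ∪ K₂ :=
    hpc.subset (characterPoint_mem_polyHull φ)
  have hcompl : (characterPoint ⁻¹' K₁)ᶜ =
      (characterPoint : characterSpace ℂ (polyAlgebra (K₁ ∪ K₂)) → _) ⁻¹' K₂ :=
    Set.ext fun φ => ⟨(hcover φ).resolve_left, fun h h' => disjoint_left.1 hdisj h' h⟩
  have hclopen : IsClopen
      ((characterPoint : characterSpace ℂ (polyAlgebra (K₁ ∪ K₂)) → _) ⁻¹' K₁) :=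
    ⟨hK₁.preimage continuous_characterPoint, isClosed_compl_iff.1
      (hcompl ▸ hK₂.preimage continuous_characterPoint)⟩
  obtain ⟨e, -, he⟩ := exists_isIdempotentElem_apply_eq_indicator hclopen
  refine ⟨e, e.2, fun x => ?_⟩
  obtain ⟨φ, hφ, hφe⟩ := exists_characterPoint_eq x
  rw [← hφe, he, ← hφ]
  rfl

/- Multiplying a polynomial by the indicator function of `K₁`, which belongs to `P(K₁ ∪ K₂)`,
removes `K₂` from the estimate. -/
lemma mem_polyHull_of_mem_polyHull_union (hK₁ : IsCompact K₁) (hK₂ : IsCompact K₂)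
    (hdisj : Disjoint K₁ K₂) (hpc : IsPolyConvex (K₁ ∪ K₂)) (hL : L ⊆ K₁)
    {z : EuclideanSpace ℂ (Fin n)} (hz : z ∈ polyHull (L ∪ K₂)) (hzK₁ : z ∈ K₁) :
    z ∈ polyHull L := fun p => by
  have : CompactSpace ↥(K₁ ∪ K₂) := isCompact_iff_compactSpace.1 (hK₁.union hK₂)
  obtain ⟨e, he_mem, he⟩ := exists_mem_polyAlgebra_eq_indicator hK₁.isClosed hK₂.isClosed hdisj hpc
  have hpe (w : ↥(K₁ ∪ K₂)) : ‖(polyRestrict (K₁ ∪ K₂) p * e) w‖ =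
      K₁.indicator (fun w => ‖eval (fun i => w i) p‖) w.1 := by
    rw [ContinuousMap.mul_apply, polyRestrict_apply, he]
    by_cases hw : w.1 ∈ K₁ <;> simp [hw]
  have h := norm_apply_le_of_mem_polyHull (union_subset_union_left K₂ hL) (z := ⟨z, .inl hzK₁⟩)
    hz (mul_mem (polyRestrict_mem_polyAlgebra p) he_mem) (sSup_norm_eval_nonneg L p) ?_
  · rwa [hpe, indicator_of_mem hzK₁] at h
  rintro w (hw | hw) <;> rw [hpe]
  · rw [indicator_of_mem (hL hw)]
    exact subset_polyHull (hK₁.isBounded.subset hL) hw p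
  · rw [indicator_of_notMem (disjoint_right.1 hdisj hw)]
    exact sSup_norm_eval_nonneg L p

end PolynomialHull

theorem stmt_0_general {n : ℕ} {K₁ K₂ L : Set (EuclideanSpace ℂ (Fin n))} (hK₁ : IsCompact K₁)
    (hK₂ : IsCompact K₂) (hdisj : Disjoint K₁ K₂) (hpc : IsPolyConvex (K₁ ∪ K₂)) (hL : L ⊆ K₁) :
    polyHull (L ∪ K₂) = polyHull L ∪ K₂ := by
  have hK := (hK₁.union hK₂).isBounded
  have hLK : L ∪ K₂ ⊆ K₁ ∪ K₂ := union_subset_union_left K₂ hL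
  refine Subset.antisymm (fun z hz => ?_) (union_subset ?_ ?_)
  · have hzK : z ∈ K₁ ∪ K₂ := hpc.subset (polyHull_mono hK hLK hz)
    exact hzK.imp_left (mem_polyHull_of_mem_polyHull_union hK₁ hK₂ hdisj hpc hL hz)
  · exact polyHull_mono (hK.subset hLK) subset_union_left
  · exact subset_union_right.trans (subset_polyHull (hK.subset hLK))

/-- If `K₁` and `K₂` are disjoint compact subsets of `ℂⁿ` such that `K₁ ∪ K₂` is polynomially
convex, then for any compact polynomially convex subset `K₁' ⊆ K₁`, the union `K₁' ∪ K₂` is also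
polynomially convex. -/
theorem stmt_0 (n : ℕ) (K₁ K₂ K₁' : Set (EuclideanSpace ℂ (Fin n)))
    (hK₁ : IsCompact K₁) (hK₂ : IsCompact K₂) (hdisj : Disjoint K₁ K₂)
    (hpc : IsPolyConvex (K₁ ∪ K₂)) (hsub : K₁' ⊆ K₁) (hK₁'c : IsCompact K₁')
    (hK₁'pc : IsPolyConvex K₁') :
    IsPolyConvex (K₁' ∪ K₂) :=
  (stmt_0_general hK₁ hK₂ hdisj hpc hsub).trans (by rw [hK₁'pc])
end
end

section
/- Let L ⊆ ℂᴺ and K ⊆ ℂⁿ be compact polynomially convex sets, U an open neighbourhood of L, and f : U → ℂⁿ a holomorphic map with f(z) ∉ K for all z ∈ L. Then the set S = {(z, ζ − f(z)) : z ∈ L, ζ ∈ K} ⊆ ℂ^{N+n} is polynomially convex and disjoint from ℂᴺ × {0}. -/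
noncomputable section
open Set Metric MvPolynomial

/-!
For a compact space `X` and a closed subalgebra `A` of `C(X, ℂ)`, every character of `A` is
dominated by the supremum norm. Hence, if the joint range of `a₁, …, a_N ∈ A` lies in a compact
polynomially convex `L`, so does `φ(a)` for every character `φ`, and the holomorphic functional
calculus puts `f ∘ a` in `A` for each `f` holomorphic near `L`.

Let `s` be in the hull of `S`, let `X = S ∪ {s}`, and let `A` be the closure in `C(X, ℂ)` of the
polynomials. On all of `A`, evaluation at `s` is dominated by the supremum over `S`. Hence
`z(s) ∈ L`, so `f ∘ z ∈ A`, and `ζ + f ∘ z ∈ A` maps `S` into `K`. By the polynomial convexity of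
`K` it maps `s` into `K` too, that is, `s ∈ S`.

For the functional calculus, a partition of unity gives a `C²` solution `G` of
`∑ (wᵢ - aᵢ) Gᵢ(w) = 1` off a compact neighbourhood of the joint spectrum, with values in `A`, and
`f(a)` is a constant multiple of `∫ f(w) det (∂Gᵢ/∂w̄ⱼ) dw`. Applying a character reduces this to
`A = ℂ`, where the integral does not change under the homotopy `(1 - t) G₀ + t G₁` of solutions. It
can therefore be computed with a solution supported on small polydiscs, for which the matrix is
triangular with a nonnegative determinant.
-/

open MeasureTheory Topology Filter

section Wirtinger

variable {E E' F F' : Type*} [NormedAddCommGroup E] [NormedSpace ℂ E] [NormedAddCommGroup E']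
  [NormedSpace ℂ E'] [NormedAddCommGroup F] [NormedSpace ℂ F] [NormedAddCommGroup F']
  [NormedSpace ℂ F'] {g h : E → F} {x v : E}

/-- Twice the antiholomorphic (Wirtinger) derivative of `g` at `x` in the direction `v`. On `ℂⁿ`,
with `v` the `j`-th basis vector, this is `2 ∂g/∂w̄ⱼ`; the factor `2` is kept to avoid fractions. -/
def dbar (v : E) (g : E → F) (x : E) : F :=
  fderiv ℝ g x v + Complex.I • fderiv ℝ g x (Complex.I • v)

theorem dbar_of_hasFDerivAt {g' : E →L[ℝ] F} (hg : HasFDerivAt g g' x) (v : E) :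
    dbar v g x = g' v + Complex.I • g' (Complex.I • v) := by
  rw [dbar, hg.fderiv]

theorem dbar_congr_of_eventuallyEq (hgh : g =ᶠ[𝓝 x] h) (v : E) : dbar v g x = dbar v h x := by
  rw [dbar, dbar, hgh.fderiv_eq]

theorem dbar_const (v : E) (c : F) (x : E) : dbar v (fun _ => c) x = 0 := by
  simp [dbar]

theorem dbar_eq_zero_of_notMem {K : Set E} (hK : IsClosed K) {c : F} (hg : ∀ y ∉ K, g y = c)
    (v : E) (hx : x ∉ K) : dbar v g x = 0 := by
  rw [dbar_congr_of_eventuallyEq (Eventually.mono (hK.isOpen_compl.mem_nhds hx) hg), dbar_const]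

theorem dbar_comp_differentiableAt_left {φ : F → F'} (hφ : DifferentiableAt ℂ φ (g x))
    (hg : DifferentiableAt ℝ g x) (v : E) :
    dbar v (fun y => φ (g y)) x = fderiv ℂ φ (g x) (dbar v g x) := by
  refine (dbar_of_hasFDerivAt ((hφ.hasFDerivAt.restrictScalars ℝ).comp x hg.hasFDerivAt) v).trans ?_
  simp [dbar]

theorem dbar_comp_differentiableAt_right {φ : E' → E} {y : E'} (hφ : DifferentiableAt ℂ φ y)
    (hg : DifferentiableAt ℝ g (φ y)) (v : E') :
    dbar v (fun y => g (φ y)) y = dbar (fderiv ℂ φ y v) g (φ y) := by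
  refine (dbar_of_hasFDerivAt (hg.hasFDerivAt.comp y (hφ.hasFDerivAt.restrictScalars ℝ)) v).trans ?_
  simp [dbar]

theorem dbar_eq_zero_of_differentiableAt (hg : DifferentiableAt ℂ g x) (v : E) :
    dbar v g x = 0 := by
  simp [dbar_of_hasFDerivAt (hg.hasFDerivAt.restrictScalars ℝ), smul_smul]

theorem dbar_clm_apply (T : F →L[ℂ] F') (hg : DifferentiableAt ℝ g x) (v : E) :
    dbar v (fun y => T (g y)) x = T (dbar v g x) := by
  rw [dbar_comp_differentiableAt_left T.differentiableAt hg, T.fderiv]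

theorem dbar_apply {ι : Type*} [Fintype ι] {g : E → ι → F} (hg : DifferentiableAt ℝ g x) (v : E)
    (i : ι) : dbar v g x i = dbar v (fun y => g y i) x :=
  (dbar_clm_apply (ContinuousLinearMap.proj (R := ℂ) (φ := fun _ : ι => F) i) hg v).symm

theorem dbar_sum {κ : Type*} {s : Finset κ} {g : κ → E → F}
    (hg : ∀ k ∈ s, DifferentiableAt ℝ (g k) x) (v : E) :
    dbar v (fun y => ∑ k ∈ s, g k y) x = ∑ k ∈ s, dbar v (g k) x := by
  simp only [dbar, fderiv_fun_sum hg, _root_.sum_apply, Finset.smul_sum, Finset.sum_add_distrib]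

theorem dbar_mul {A : Type*} [NormedCommRing A] [NormedAlgebra ℂ A] {g h : E → A}
    (hg : DifferentiableAt ℝ g x) (hh : DifferentiableAt ℝ h x) (v : E) :
    dbar v (fun y => g y * h y) x = g x * dbar v h x + dbar v g x * h x := by
  simp only [dbar, fderiv_fun_mul hg hh, _root_.add_apply, _root_.smul_apply, smul_add, mul_add,
    add_mul, smul_eq_mul, mul_smul_comm, smul_mul_assoc, mul_comm (h x)]
  abel

theorem dbar_sub (hg : DifferentiableAt ℝ g x) (hh : DifferentiableAt ℝ h x) (v : E) :
    dbar v (g - h) x = dbar v g x - dbar v h x := by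
  simp only [dbar, fderiv_sub hg hh, _root_.sub_apply, smul_sub]
  abel

theorem dbar_lineMap (hg : DifferentiableAt ℝ g x) (hh : DifferentiableAt ℝ h x) (t : ℝ) (v : E) :
    dbar v (AffineMap.lineMap g h t) x = AffineMap.lineMap (dbar v g x) (dbar v h x) t := by
  rw [AffineMap.lineMap_apply_module, AffineMap.lineMap_apply_module,
    dbar_of_hasFDerivAt ((hg.hasFDerivAt.const_smul (1 - t)).add (hh.hasFDerivAt.const_smul t))]
  simp only [dbar, _root_.add_apply, _root_.smul_apply, smul_add, smul_comm Complex.I]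
  abel

theorem dbar_eq_zero_of_forall_add_smul (hg : DifferentiableAt ℝ g x)
    (hv : ∀ t : ℂ, g (x + t • v) = g x) : dbar v g x = 0 := by
  have hline (c : ℂ) : fderiv ℝ g x (c • v) = 0 := by
    rw [← hg.lineDeriv_eq_fderiv, lineDeriv]
    have (t : ℝ) : g (x + t • c • v) = g x := by
      rw [← hv (t • c), smul_assoc]
    simp [this]
  have h1 := hline 1
  rw [one_smul] at h1
  simp [dbar, h1, hline]

theorem contDiff_dbar {m n : WithTop ℕ∞} (hg : ContDiff ℝ n g) (hmn : m + 1 ≤ n) (v : E) :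
    ContDiff ℝ m (dbar v g) := by
  have h := hg.fderiv_right hmn
  exact (h.clm_apply contDiff_const).add ((h.clm_apply contDiff_const).const_smul Complex.I)

theorem dbar_dbar_comm (hg : ContDiff ℝ 2 g) (x u v : E) :
    dbar u (dbar v g) x = dbar v (dbar u g) x := by
  have hsymm : IsSymmSndFDerivAt ℝ g x := hg.contDiffAt.isSymmSndFDerivAt (by simp)
  have hfderiv : HasFDerivAt (fderiv ℝ g) (fderiv ℝ (fderiv ℝ g) x) x :=
    ((hg.fderiv_right (m := 1) le_rfl).differentiable one_ne_zero x).hasFDerivAt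
  have happly (w : E) :
      HasFDerivAt (fun y => fderiv ℝ g y w) ((fderiv ℝ (fderiv ℝ g) x).flip w) x := by
    simpa using hfderiv.clm_apply (hasFDerivAt_const w x)
  have hdbar (w : E) : HasFDerivAt (dbar w g) ((fderiv ℝ (fderiv ℝ g) x).flip w +
      Complex.I • (fderiv ℝ (fderiv ℝ g) x).flip (Complex.I • w)) x :=
    (happly w).add ((happly (Complex.I • w)).const_smul Complex.I)
  rw [dbar_of_hasFDerivAt (hdbar v), dbar_of_hasFDerivAt (hdbar u)]
  simp only [_root_.add_apply, _root_.smul_apply, ContinuousLinearMap.flip_apply, smul_add]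
  rw [hsymm.eq u v, hsymm.eq u (Complex.I • v), hsymm.eq (Complex.I • u) v,
    hsymm.eq (Complex.I • u) (Complex.I • v)]
  abel

end Wirtinger

section IntegrationByParts

variable {E F : Type*} [NormedAddCommGroup E] [NormedSpace ℂ E] [NormedAddCommGroup F]
  [NormedSpace ℂ F]

theorem norm_fderiv_apply_sub_le {f : E → F} {x y v : E} {R C : ℝ} (hR : 0 < R)
    (hx : ∀ t ∈ closedBall (0 : ℂ) R, DifferentiableAt ℂ f (x + t • v))
    (hy : ∀ t ∈ closedBall (0 : ℂ) R, DifferentiableAt ℂ f (y + t • v))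
    (hC : ∀ t ∈ sphere (0 : ℂ) R, ‖f (x + t • v) - f (y + t • v)‖ ≤ C) :
    ‖fderiv ℂ f x v - fderiv ℂ f y v‖ ≤ C / R := by
  have hline {z : E} (hz : ∀ t ∈ closedBall (0 : ℂ) R, DifferentiableAt ℂ f (z + t • v)) (t : ℂ)
      (ht : t ∈ closedBall 0 R) :
      HasDerivAt (fun s : ℂ => f (z + s • v)) (fderiv ℂ f (z + t • v) v) t := by
    have hinner : HasDerivAt (fun s : ℂ => z + s • v) v t := by
      simpa using ((hasDerivAt_id t).smul_const v).const_add z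
    exact (hz t ht).hasFDerivAt.comp_hasDerivAt t hinner
  have hsub (t : ℂ) (ht : t ∈ closedBall 0 R) := (hline hx t ht).sub (hline hy t ht)
  have hcauchy := Complex.norm_deriv_le_of_forall_mem_sphere_norm_le hR
    (DifferentiableOn.diffContOnCl fun t ht => ((hsub t
      (closure_ball_subset_closedBall ht)).differentiableAt.differentiableWithinAt)) hC
  rw [(hsub 0 (mem_closedBall_self hR.le)).deriv] at hcauchy
  simpa only [zero_smul, add_zero] using hcauchy

/- The Cauchy estimate on the discs `{x + t • v : ‖t‖ ≤ R}` gives continuity of directional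
derivatives without Hartogs' theorem. -/
theorem continuousOn_fderiv_apply {f : E → F} {U : Set E} (hU : IsOpen U)
    (hf : DifferentiableOn ℂ f U) (v : E) : ContinuousOn (fun x => fderiv ℂ f x v) U := by
  intro x₀ hx₀
  have hmap : Continuous fun q : E × ℂ => q.1 + q.2 • v := by fun_prop
  have hmap₀ : Continuous fun t : ℂ => x₀ + t • v := by fun_prop
  obtain ⟨R, hR, hRU⟩ := nhds_basis_closedBall.mem_iff.1
    ((hU.preimage hmap₀).mem_nhds (x := 0) (by simpa using hx₀))
  refine (Metric.continuousAt_iff'.2 fun ε hε => ?_).continuousWithinAt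
  have hclose : ∀ᶠ x in 𝓝 x₀, ∀ t ∈ closedBall (0 : ℂ) R,
      x + t • v ∈ U ∧ dist (f (x + t • v)) (f (x₀ + t • v)) < ε / 2 * R := by
    refine (isCompact_closedBall 0 R).eventually_forall_of_forall_eventually fun t ht => ?_
    have hUt : U ∈ 𝓝 (x₀ + t • v) := hU.mem_nhds (hRU ht)
    have hft : ContinuousAt f (x₀ + t • v) := hf.continuousOn.continuousAt hUt
    have hfc : ContinuousAt (fun q : E × ℂ => f (q.1 + q.2 • v)) (x₀, t) :=
      ContinuousAt.comp (g := f) hft hmap.continuousAt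
    have hfc₀ : ContinuousAt (fun q : E × ℂ => f (x₀ + q.2 • v)) (x₀, t) :=
      ContinuousAt.comp (g := f) hft (hmap₀.comp continuous_snd).continuousAt
    have hmapU : ∀ᶠ q : E × ℂ in 𝓝 (x₀, t), q.1 + q.2 • v ∈ U :=
      hmap.continuousAt.preimage_mem_nhds hUt
    exact hmapU.and ((hfc.dist hfc₀).eventually_lt continuousAt_const
      (by simpa using by positivity))
  filter_upwards [hclose] with x hx
  have hcauchy := norm_fderiv_apply_sub_le hR
    (fun t ht => hf.differentiableAt (hU.mem_nhds (hx t ht).1))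
    (fun t ht => hf.differentiableAt (hU.mem_nhds (hRU ht)))
    fun t ht => by simpa only [dist_eq_norm] using (hx t (sphere_subset_closedBall ht)).2.le
  rw [dist_eq_norm]
  exact (hcauchy.trans_eq (mul_div_cancel_right₀ _ hR.ne')).trans_lt (half_lt_self hε)

theorem continuous_smul_of_forall_notMem_eq_zero {X : Type*} [TopologicalSpace X] {f : X → ℂ}
    {g : X → F} {U K : Set X} (hU : IsOpen U) (hf : ContinuousOn f U) (hg : Continuous g)
    (hK : IsClosed K) (hKU : K ⊆ U) (hgK : ∀ x ∉ K, g x = 0) : Continuous fun x => f x • g x := by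
  have hsupp : tsupport (fun x => f x • g x) ⊆ K :=
    closure_minimal (fun x hx => by_contra fun h => hx (by simp [hgK x h])) hK
  exact continuous_of_tsupport fun x hx =>
    (hf.continuousAt (hU.mem_nhds (hKU (hsupp hx)))).smul hg.continuousAt

theorem integrable_smul_of_forall_notMem_eq_zero {X : Type*} [TopologicalSpace X] [T2Space X]
    [MeasurableSpace X] [OpensMeasurableSpace X] {μ : Measure X} [IsFiniteMeasureOnCompacts μ]
    {f : X → ℂ} {g : X → F} {U K : Set X} (hU : IsOpen U) (hf : ContinuousOn f U)
    (hg : Continuous g) (hK : IsCompact K) (hKU : K ⊆ U) (hgK : ∀ x ∉ K, g x = 0) :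
    Integrable (fun x => f x • g x) μ :=
  (continuous_smul_of_forall_notMem_eq_zero hU hf hg hK.isClosed hKU
    hgK).integrable_of_hasCompactSupport <|
    HasCompactSupport.intro hK fun x hx => by simp [hgK x hx]

variable [MeasurableSpace E] [BorelSpace E] [FiniteDimensional ℝ E] {μ : Measure E}
  [μ.IsAddHaarMeasure]

theorem integral_smul_fderiv_eq_neg_of_forall_notMem_eq_zero {f : E → ℂ} {g : E → F}
    {U K : Set E} (hU : IsOpen U) (hf : DifferentiableOn ℂ f U) (hg : ContDiff ℝ 1 g)
    (hK : IsCompact K) (hKU : K ⊆ U) (hgK : ∀ x ∉ K, g x = 0) (v : E) :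
    Integrable (fun x => f x • fderiv ℝ g x v) μ ∧ Integrable (fun x => fderiv ℝ f x v • g x) μ ∧
      ∫ x, f x • fderiv ℝ g x v ∂μ = -∫ x, fderiv ℝ f x v • g x ∂μ := by
  have hsupp : tsupport g ⊆ K :=
    closure_minimal (fun x hx => by_contra fun h => hx (hgK x h)) hK.isClosed
  have hfd (x : E) (hx : x ∈ U) : DifferentiableAt ℂ f x := hf.differentiableAt (hU.mem_nhds hx)
  have hf' : ContinuousOn (fun x => fderiv ℝ f x v) U :=
    (continuousOn_fderiv_apply hU hf v).congr fun x hx => by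
      simp [(hfd x hx).fderiv_restrictScalars ℝ]
  have hg' (x : E) (hx : x ∉ K) : fderiv ℝ g x v = 0 := by
    rw [fderiv_of_notMem_tsupport ℝ (fun h => hx (hsupp h)), _root_.zero_apply]
  have hfg' : Integrable (fun x => f x • fderiv ℝ g x v) μ :=
    integrable_smul_of_forall_notMem_eq_zero hU hf.continuousOn
      ((hg.continuous_fderiv one_ne_zero).clm_apply continuous_const) hK hKU hg'
  have hf'g : Integrable (fun x => fderiv ℝ f x v • g x) μ :=
    integrable_smul_of_forall_notMem_eq_zero hU hf' hg.continuous hK hKU hgK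
  exact ⟨hfg', hf'g, integral_smul_fderiv_eq_neg_fderiv_smul_of_integrable hf'g hfg'
    (integrable_smul_of_forall_notMem_eq_zero hU hf.continuousOn hg.continuous hK hKU hgK)
    (fun x hx => (hfd x (hKU (hsupp hx))).restrictScalars ℝ)
    fun x _ => hg.differentiable one_ne_zero x⟩

theorem integral_smul_dbar_eq_zero {f : E → ℂ} {g : E → F} {U K : Set E} (hU : IsOpen U)
    (hf : DifferentiableOn ℂ f U) (hg : ContDiff ℝ 1 g)
    (hK : IsCompact K) (hKU : K ⊆ U) (hgK : ∀ x ∉ K, g x = 0) (v : E) :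
    ∫ x, f x • dbar v g x ∂μ = 0 := by
  have hparts (u : E) :=
    integral_smul_fderiv_eq_neg_of_forall_notMem_eq_zero (μ := μ) hU hf hg hK hKU hgK u
  obtain ⟨hfg₁, hgf₁, hparts₁⟩ := hparts v
  obtain ⟨hfg₂, hgf₂, hparts₂⟩ := hparts (Complex.I • v)
  have hdbar (x : E) :
      fderiv ℝ f x v • g x + Complex.I • fderiv ℝ f x (Complex.I • v) • g x = 0 := by
    by_cases hx : x ∈ K
    · have hfx := dbar_eq_zero_of_differentiableAt (hf.differentiableAt (hU.mem_nhds (hKU hx))) v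
      rw [← smul_assoc, ← add_smul, ← dbar, hfx, zero_smul]
    · simp [hgK x hx]
  calc ∫ x, f x • dbar v g x ∂μ
      = ∫ x, (f x • fderiv ℝ g x v + Complex.I • f x • fderiv ℝ g x (Complex.I • v)) ∂μ := by
        simp only [dbar, smul_add, smul_comm Complex.I]
    _ = -∫ x, (fderiv ℝ f x v • g x + Complex.I • fderiv ℝ f x (Complex.I • v) • g x) ∂μ := by
        rw [integral_add hfg₁ (hfg₂.fun_smul Complex.I),
          integral_add hgf₁ (hgf₂.fun_smul Complex.I), integral_smul, integral_smul, hparts₁,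
          hparts₂, smul_neg, neg_add]
    _ = 0 := by simp only [hdbar, integral_zero, neg_zero]

end IntegrationByParts

section Determinant

theorem sum_sum_eq_zero_of_forall_eq_neg {ι M : Type*} [Fintype ι] [AddCommGroup M]
    [IsAddTorsionFree M] {T : ι → ι → M} (hT : ∀ j k, T j k = -T k j) : ∑ j, ∑ k, T j k = 0 := by
  have hneg : ∑ j, ∑ k, T j k = -∑ j, ∑ k, T j k := by
    conv_lhs => rw [Finset.sum_comm]
    simp only [← Finset.sum_neg_distrib, ← hT]
  exact self_eq_neg.1 hneg

variable {ι : Type*} [Fintype ι] [DecidableEq ι]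

theorem det_updateRow_updateRow_swap {R : Type*} [CommRing R] (M : Matrix ι ι R) {j k : ι}
    (hjk : j ≠ k) (u v : ι → R) :
    ((M.updateRow j u).updateRow k v).det = -((M.updateRow k u).updateRow j v).det := by
  have hswap : (M.updateRow j u).updateRow k v =
      ((M.updateRow k u).updateRow j v).submatrix (Equiv.swap j k) id := by
    ext a b
    rcases eq_or_ne a j with rfl | haj
    · simp [Matrix.updateRow_apply, hjk, hjk.symm]
    rcases eq_or_ne a k with rfl | hak
    · simp [Matrix.updateRow_apply]
    · simp [Matrix.updateRow_apply, Equiv.swap_apply_of_ne_of_ne haj hak, haj, hak]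
  rw [hswap, Matrix.det_permute, Equiv.Perm.sign_swap hjk]
  simp

theorem det_eq_zero_of_mulVec_eq_zero_of_dotProduct_eq_one {R : Type*} [CommRing R]
    {M : Matrix ι ι R} {v g : ι → R} (hM : M.mulVec v = 0) (hv : v ⬝ᵥ g = 1) : M.det = 0 := by
  have hdet : M.det • v = 0 := by
    simpa [Matrix.mulVec_mulVec, Matrix.adjugate_mul, Matrix.smul_mulVec] using
      congrArg M.adjugate.mulVec hM
  calc M.det = (M.det • v) ⬝ᵥ g := by rw [smul_dotProduct, hv, smul_eq_mul, mul_one]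
    _ = 0 := by rw [hdet, zero_dotProduct]

variable {A : Type*} [NormedCommRing A]

/-- The determinant as a continuous multilinear map of the rows, over a field `𝕜` of scalars. -/
def detContinuousMultilinearMap (𝕜 ι A : Type*) [Fintype ι] [DecidableEq ι] [NormedCommRing A]
    [NontriviallyNormedField 𝕜] [NormedAlgebra 𝕜 A] :
    ContinuousMultilinearMap 𝕜 (fun _ : ι => ι → A) A where
  toMultilinearMap := Matrix.detRowAlternating.toMultilinearMap.restrictScalars 𝕜
  cont := Continuous.matrix_det (A := fun M : ι → ι → A => Matrix.of M) continuous_id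

theorem hasFDerivAt_det (𝕜 : Type*) [NontriviallyNormedField 𝕜] [NormedAlgebra 𝕜 A]
    (M : ι → ι → A) :
    HasFDerivAt (fun N : ι → ι → A => (Matrix.of N).det)
      ((detContinuousMultilinearMap 𝕜 ι A).linearDeriv M) M :=
  (detContinuousMultilinearMap 𝕜 ι A).hasFDerivAt M

theorem linearDeriv_det_apply (𝕜 : Type*) [NontriviallyNormedField 𝕜] [NormedAlgebra 𝕜 A]
    (M M' : ι → ι → A) :
    (detContinuousMultilinearMap 𝕜 ι A).linearDeriv M M' =
      ∑ i, ((Matrix.of M).updateRow i (M' i)).det :=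
  (detContinuousMultilinearMap 𝕜 ι A).linearDeriv_apply M M'

theorem contDiff_det {𝕜 E : Type*} [NontriviallyNormedField 𝕜] [NormedAlgebra 𝕜 A]
    [NormedAddCommGroup E] [NormedSpace 𝕜 E] {n : WithTop ℕ∞} {M : E → ι → ι → A}
    (hM : ContDiff 𝕜 n M) : ContDiff 𝕜 n fun x => (Matrix.of (M x)).det :=
  (detContinuousMultilinearMap 𝕜 ι A).contDiff.comp hM

variable [NormedAlgebra ℂ A]

theorem dbar_det {E : Type*} [NormedAddCommGroup E] [NormedSpace ℂ E] {M : E → ι → ι → A} {x : E}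
    (hM : DifferentiableAt ℝ M x) (v : E) :
    dbar v (fun y => (Matrix.of (M y)).det) x =
      ∑ i, ((Matrix.of (M x)).updateRow i (dbar v (fun y => M y i) x)).det := by
  rw [dbar_comp_differentiableAt_left (hasFDerivAt_det ℂ (M x)).differentiableAt hM,
    (hasFDerivAt_det ℂ (M x)).fderiv, linearDeriv_det_apply]
  simp only [dbar_apply hM]

/-- The `∂̄`-matrix of a vector field on `ℂ^ι`: its `j`-th row is the derivative of the field with
respect to `w̄ⱼ` (up to the factor `2` of `dbar`). -/
def dbarMatrix (G : (ι → ℂ) → ι → A) (w : ι → ℂ) : Matrix ι ι A :=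
  Matrix.of fun j => dbar (Pi.single j 1) G w

theorem updateRow_dbarMatrix_eq_of (G : (ι → ℂ) → ι → A) (w : ι → ℂ) (j : ι) (u : ι → A) :
    (dbarMatrix G w).updateRow j u =
      Matrix.of fun k => if k = j then u else dbar (Pi.single k 1) G w := by
  ext k l
  rcases eq_or_ne k j with rfl | hkj
  · simp
  · simp [hkj, dbarMatrix]

theorem contDiff_dbarMatrix {m n : WithTop ℕ∞} {G : (ι → ℂ) → ι → A} (hG : ContDiff ℝ n G)
    (hmn : m + 1 ≤ n) : ContDiff ℝ m fun (w : ι → ℂ) (j : ι) => dbarMatrix G w j :=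
  contDiff_pi.2 fun _ => contDiff_dbar hG hmn _

theorem contDiff_det_updateRow_dbarMatrix {m n : WithTop ℕ∞} {G H : (ι → ℂ) → ι → A}
    (hG : ContDiff ℝ n G) (hmn : m + 1 ≤ n) (hH : ContDiff ℝ m H) (j : ι) :
    ContDiff ℝ m fun w => ((dbarMatrix G w).updateRow j (H w)).det := by
  simp only [updateRow_dbarMatrix_eq_of]
  refine contDiff_det (contDiff_pi.2 fun k => ?_)
  split_ifs
  · exact hH
  · exact contDiff_dbar hG hmn _

theorem continuous_det_dbarMatrix {G : (ι → ℂ) → ι → A} (hG : ContDiff ℝ 2 G) :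
    Continuous fun w => (dbarMatrix G w).det :=
  (contDiff_det (contDiff_dbarMatrix hG one_add_one_eq_two.le)).continuous

/-- The terms containing second derivatives of `G` cancel in pairs, because the determinant is
alternating and the operators `∂/∂w̄ⱼ` commute. -/
theorem sum_dbar_det_updateRow {G H : (ι → ℂ) → ι → A} (hG : ContDiff ℝ 2 G)
    (hH : ContDiff ℝ 1 H) (w : ι → ℂ) :
    ∑ j, dbar (Pi.single j 1) (fun x => ((dbarMatrix G x).updateRow j (H x)).det) w =
      ∑ j, ((dbarMatrix G w).updateRow j (dbarMatrix H w j)).det := by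
  let T (j k : ι) : A := if k = j then 0 else (((dbarMatrix G w).updateRow j (H w)).updateRow k
    (dbar (Pi.single j 1) (dbar (Pi.single k 1) G) w)).det
  have hGd (k : ι) : DifferentiableAt ℝ (dbar (Pi.single k 1) G) w :=
    (contDiff_dbar hG one_add_one_eq_two.le _).differentiable one_ne_zero w
  have hexpand (j : ι) :
      dbar (Pi.single j 1) (fun x => ((dbarMatrix G x).updateRow j (H x)).det) w =
        ((dbarMatrix G w).updateRow j (dbarMatrix H w j)).det + ∑ k, T j k := by
    have hrows : DifferentiableAt ℝ
        (fun x k => if k = j then H x else dbar (Pi.single k 1) G x) w := by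
      refine differentiableAt_pi.2 fun k => ?_
      split_ifs
      · exact hH.differentiable one_ne_zero w
      · exact hGd k
    simp only [updateRow_dbarMatrix_eq_of]
    rw [dbar_det hrows, ← Finset.add_sum_erase _ _ (Finset.mem_univ j),
      ← Finset.add_sum_erase _ (T j) (Finset.mem_univ j)]
    simp only [← updateRow_dbarMatrix_eq_of, if_true, Matrix.updateRow_idem, T, zero_add]
    refine congrArg₂ (· + ·) rfl (Finset.sum_congr rfl fun k hk => ?_)
    simp only [Finset.ne_of_mem_erase hk, if_false]
  have hT (j k : ι) : T j k = -T k j := by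
    rcases eq_or_ne k j with rfl | hkj
    · simp [T]
    · simp only [T, hkj, hkj.symm, if_false]
      rw [dbar_dbar_comm hG w, det_updateRow_updateRow_swap _ hkj.symm]
  have : IsAddTorsionFree A := .of_isTorsionFree ℂ A
  simp only [hexpand, Finset.sum_add_distrib, sum_sum_eq_zero_of_forall_eq_neg hT, add_zero]

end Determinant

section LeraySection

variable {ι A : Type*} [Fintype ι] [NormedCommRing A] [NormedAlgebra ℂ A]

/-- `G` is a `C²` Leray section for the tuple `a` off `K`: a solution of `∑ i, (wᵢ - aᵢ) Gᵢ(w) = 1`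
for `w ∉ K`. For `A = ℂ` the tuple `a` is a point of `ℂ^ι`. -/
structure IsLeraySection (a : ι → A) (K : Set (ι → ℂ)) (G : (ι → ℂ) → ι → A) : Prop where
  contDiff : ContDiff ℝ 2 G
  dotProduct_eq_one : ∀ w ∉ K, (fun i => algebraMap ℂ A (w i) - a i) ⬝ᵥ G w = 1

namespace IsLeraySection

variable {a : ι → A} {K : Set (ι → ℂ)} {G G₀ G₁ H : (ι → ℂ) → ι → A} {f : (ι → ℂ) → ℂ}
  {U : Set (ι → ℂ)} {w : ι → ℂ}

theorem mono (hG : IsLeraySection a K G) {K' : Set (ι → ℂ)} (hKK' : K ⊆ K') :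
    IsLeraySection a K' G :=
  ⟨hG.contDiff, fun w hw => hG.dotProduct_eq_one w fun h => hw (hKK' h)⟩

theorem lineMap (hG₀ : IsLeraySection a K G₀) (hG₁ : IsLeraySection a K G₁) (t : ℝ) :
    IsLeraySection a K (AffineMap.lineMap G₀ G₁ t) := by
  rw [AffineMap.lineMap_apply_module]
  refine ⟨(hG₀.contDiff.const_smul (1 - t)).add (hG₁.contDiff.const_smul t), fun w hw => ?_⟩
  rw [Pi.add_apply, Pi.smul_apply, Pi.smul_apply, dotProduct_add, dotProduct_smul, dotProduct_smul,
    hG₀.dotProduct_eq_one w hw, hG₁.dotProduct_eq_one w hw, ← add_smul, sub_add_cancel, one_smul]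

variable [DecidableEq ι]

theorem dbarMatrix_mulVec_eq_zero (hG : IsLeraySection a K G) (hK : IsClosed K) (hw : w ∉ K) :
    (dbarMatrix G w).mulVec (fun i => algebraMap ℂ A (w i) - a i) = 0 := by
  ext j
  have hGw : DifferentiableAt ℝ G w := hG.contDiff.differentiable two_ne_zero w
  have hcoord (i : ι) : DifferentiableAt ℂ (fun x : ι → ℂ => algebraMap ℂ A (x i) - a i) w := by
    simp only [Algebra.algebraMap_eq_smul_one]
    fun_prop
  have hzero := dbar_eq_zero_of_notMem hK hG.dotProduct_eq_one (Pi.single j 1) hw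
  simp only [dotProduct] at hzero
  rw [dbar_sum fun i _ => ((hcoord i).restrictScalars ℝ).fun_mul (differentiableAt_pi.1 hGw i)]
    at hzero
  simp only [dbar_mul ((hcoord _).restrictScalars ℝ) (differentiableAt_pi.1 hGw _),
    dbar_eq_zero_of_differentiableAt (hcoord _), zero_mul, add_zero] at hzero
  simpa [Matrix.mulVec, dotProduct, dbarMatrix, dbar_apply hGw, mul_comm] using hzero

theorem det_dbarMatrix_eq_zero (hG : IsLeraySection a K G) (hK : IsClosed K) (hw : w ∉ K) :
    (dbarMatrix G w).det = 0 :=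
  det_eq_zero_of_mulVec_eq_zero_of_dotProduct_eq_one (hG.dbarMatrix_mulVec_eq_zero hK hw)
    (hG.dotProduct_eq_one w hw)

theorem det_updateRow_dbarMatrix_eq_zero (hG : IsLeraySection a K G) (hK : IsClosed K)
    (hw : w ∉ K) {u : ι → A} (hu : u ⬝ᵥ (fun i => algebraMap ℂ A (w i) - a i) = 0) (j : ι) :
    ((dbarMatrix G w).updateRow j u).det = 0 := by
  refine det_eq_zero_of_mulVec_eq_zero_of_dotProduct_eq_one ?_ (hG.dotProduct_eq_one w hw)
  ext k
  rcases eq_or_ne k j with rfl | hkj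
  · simpa [Matrix.mulVec] using hu
  · simpa [Matrix.mulVec, hkj] using congrFun (hG.dbarMatrix_mulVec_eq_zero hK hw) k

theorem integrable_smul_det_dbarMatrix (hG : IsLeraySection a K G) (hU : IsOpen U)
    (hf : ContinuousOn f U) (hK : IsCompact K) (hKU : K ⊆ U) :
    Integrable fun w => f w • (dbarMatrix G w).det :=
  integrable_smul_of_forall_notMem_eq_zero hU hf (continuous_det_dbarMatrix hG.contDiff) hK hKU
    fun _ hw => hG.det_dbarMatrix_eq_zero hK.isClosed hw

theorem sum_det_updateRow_dbarMatrix_eq_zero (hG : IsLeraySection a K G) (hK : IsClosed K)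
    (hH : ContDiff ℝ 1 H)
    (hHK : ∀ w ∉ K, H w ⬝ᵥ (fun i => algebraMap ℂ A (w i) - a i) = 0) (hw : w ∉ K) :
    ∑ j, ((dbarMatrix G w).updateRow j (dbarMatrix H w j)).det = 0 := by
  rw [← sum_dbar_det_updateRow hG.contDiff hH]
  exact Finset.sum_eq_zero fun j _ => dbar_eq_zero_of_notMem hK
    (fun x hx => hG.det_updateRow_dbarMatrix_eq_zero hK hx (hHK x hx) j) _ hw

theorem integral_smul_sum_det_updateRow_dbarMatrix_eq_zero (hG : IsLeraySection a K G)
    (hU : IsOpen U) (hf : DifferentiableOn ℂ f U) (hK : IsCompact K) (hKU : K ⊆ U)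
    (hH : ContDiff ℝ 1 H)
    (hHK : ∀ w ∉ K, H w ⬝ᵥ (fun i => algebraMap ℂ A (w i) - a i) = 0) :
    ∫ w, f w • ∑ j, ((dbarMatrix G w).updateRow j (dbarMatrix H w j)).det = 0 := by
  have hdet (j : ι) : ContDiff ℝ 1 fun w => ((dbarMatrix G w).updateRow j (H w)).det :=
    contDiff_det_updateRow_dbarMatrix hG.contDiff one_add_one_eq_two.le hH j
  have hdetK (j : ι) (w : ι → ℂ) (hw : w ∉ K) : ((dbarMatrix G w).updateRow j (H w)).det = 0 :=
    hG.det_updateRow_dbarMatrix_eq_zero hK.isClosed hw (hHK w hw) j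
  have hint (j : ι) : Integrable fun w =>
      f w • dbar (Pi.single j 1) (fun x => ((dbarMatrix G x).updateRow j (H x)).det) w :=
    integrable_smul_of_forall_notMem_eq_zero hU hf.continuousOn
      (contDiff_dbar (hdet j) (m := 0) (zero_add 1).le _).continuous hK hKU
      fun w hw => dbar_eq_zero_of_notMem hK.isClosed (hdetK j) _ hw
  simp only [← sum_dbar_det_updateRow hG.contDiff hH, Finset.smul_sum]
  rw [integral_finsetSum _ fun j _ => hint j]
  exact Finset.sum_eq_zero fun j _ =>
    integral_smul_dbar_eq_zero hU hf (hdet j) hK hKU (hdetK j) _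

end IsLeraySection

end LeraySection

section Homotopy

theorem integral_eq_integral_of_hasDerivAt {X F : Type*} [TopologicalSpace X] [T2Space X]
    [MeasurableSpace X] [OpensMeasurableSpace X] {μ : Measure X} [IsFiniteMeasureOnCompacts μ]
    [NormedAddCommGroup F] [NormedSpace ℝ F] [CompleteSpace F] {d q : X → ℝ → F} {K : Set X}
    (hq : Continuous (Function.uncurry q)) (hK : IsCompact K)
    (hqK : ∀ x ∉ K, ∀ t, q x t = 0) (hdq : ∀ x t, HasDerivAt (d x) (q x t) t)
    (hq₀ : ∀ t, ∫ x, q x t ∂μ = 0) (hd₀ : Integrable (fun x => d x 0) μ)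
    (hd₁ : Integrable (fun x => d x 1) μ) : ∫ x, d x 0 ∂μ = ∫ x, d x 1 ∂μ := by
  have hFTC (x : X) : d x 1 - d x 0 = ∫ t : unitInterval, q x t := by
    rw [← intervalIntegral.integral_eq_sub_of_hasDerivAt (fun t _ => hdq x t)
        ((hq.comp (Continuous.prodMk_right x)).intervalIntegrable 0 1),
      intervalIntegral.integral_of_le zero_le_one, ← integral_Icc_eq_integral_Ioc]
    exact (integral_subtype_comap measurableSet_Icc (q x)).symm
  have hcont : Continuous (Function.uncurry fun (x : X) (t : unitInterval) => q x t) :=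
    hq.comp (by fun_prop : Continuous fun p : X × unitInterval => (p.1, (p.2 : ℝ)))
  have hsupp : HasCompactSupport (Function.uncurry fun (x : X) (t : unitInterval) => q x t) :=
    HasCompactSupport.intro' (hK.prod isCompact_univ) (hK.isClosed.prod isClosed_univ)
      fun p hp => hqK p.1 (fun h => hp ⟨h, trivial⟩) p.2
  refine (sub_eq_zero.1 ?_).symm
  calc ∫ x, d x 1 ∂μ - ∫ x, d x 0 ∂μ = ∫ x, (∫ t : unitInterval, q x t) ∂μ := by
        rw [← integral_sub hd₁ hd₀]
        simp only [hFTC]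
    _ = ∫ t : unitInterval, ∫ x, q x t ∂μ :=
        integral_integral_swap_of_hasCompactSupport hcont hsupp
    _ = 0 := by simp only [hq₀, integral_zero]

variable {ι A : Type*} [Fintype ι] [DecidableEq ι] [NormedCommRing A] [NormedAlgebra ℂ A]
  {G₀ G₁ : (ι → ℂ) → ι → A}

theorem dbarMatrix_lineMap {w : ι → ℂ} (hG₀ : DifferentiableAt ℝ G₀ w)
    (hG₁ : DifferentiableAt ℝ G₁ w) (t : ℝ) :
    dbarMatrix (AffineMap.lineMap G₀ G₁ t) w = Matrix.of (AffineMap.lineMap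
      (fun j => dbarMatrix G₀ w j) (fun j => dbarMatrix G₁ w j) t : ι → ι → A) := by
  ext j : 1
  simp only [dbarMatrix, Matrix.of_apply, AffineMap.pi_lineMap_apply, dbar_lineMap hG₀ hG₁]

theorem hasDerivAt_det_dbarMatrix_lineMap {w : ι → ℂ} (hG₀ : DifferentiableAt ℝ G₀ w)
    (hG₁ : DifferentiableAt ℝ G₁ w) (t : ℝ) :
    HasDerivAt (fun s => (dbarMatrix (AffineMap.lineMap G₀ G₁ s) w).det)
      (∑ j, ((dbarMatrix (AffineMap.lineMap G₀ G₁ t) w).updateRow j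
        (dbarMatrix (G₁ - G₀) w j)).det) t := by
  have hsub (j : ι) : dbarMatrix (G₁ - G₀) w j = dbarMatrix G₁ w j - dbarMatrix G₀ w j :=
    dbar_sub hG₁ hG₀ _
  simp only [dbarMatrix_lineMap hG₀ hG₁, hsub]
  rw [← linearDeriv_det_apply ℝ _ (fun j => dbarMatrix G₁ w j - dbarMatrix G₀ w j)]
  exact HasFDerivAt.comp_hasDerivAt (l := fun N : ι → ι → A => (Matrix.of N).det) t
    (hasFDerivAt_det ℝ _) AffineMap.hasDerivAt_lineMap

theorem continuous_det_updateRow_dbarMatrix_lineMap {H : (ι → ℂ) → ι → A} (hG₀ : ContDiff ℝ 1 G₀)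
    (hG₁ : ContDiff ℝ 1 G₁) (hH : Continuous H) (j : ι) :
    Continuous fun p : (ι → ℂ) × ℝ =>
      ((dbarMatrix (AffineMap.lineMap G₀ G₁ p.2) p.1).updateRow j (H p.1)).det := by
  have hdbar {G : (ι → ℂ) → ι → A} (hG : ContDiff ℝ 1 G) :
      Continuous fun w (k : ι) => dbarMatrix G w k :=
    (contDiff_dbarMatrix (m := 0) hG (zero_add 1).le).continuous
  refine Continuous.matrix_det (Continuous.matrix_updateRow j ?_ (hH.comp continuous_fst))
  have hlineMap (p : (ι → ℂ) × ℝ) := dbarMatrix_lineMap (hG₀.differentiable one_ne_zero p.1)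
    (hG₁.differentiable one_ne_zero p.1) p.2
  rw [continuous_congr hlineMap]
  simp only [AffineMap.lineMap_apply_module]
  exact ((continuous_const.sub continuous_snd).smul ((hdbar hG₀).comp continuous_fst)).add
    (continuous_snd.smul ((hdbar hG₁).comp continuous_fst))

theorem IsLeraySection.integral_smul_det_dbarMatrix_eq [CompleteSpace A] {a : ι → A}
    {f : (ι → ℂ) → ℂ} {U K : Set (ι → ℂ)} (hG₀ : IsLeraySection a K G₀)
    (hG₁ : IsLeraySection a K G₁) (hU : IsOpen U) (hf : DifferentiableOn ℂ f U)
    (hK : IsCompact K) (hKU : K ⊆ U) :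
    ∫ w, f w • (dbarMatrix G₀ w).det = ∫ w, f w • (dbarMatrix G₁ w).det := by
  let q (w : ι → ℂ) (t : ℝ) : A := ∑ j, ((dbarMatrix (AffineMap.lineMap G₀ G₁ t) w).updateRow j
    (dbarMatrix (G₁ - G₀) w j)).det
  have hH : ContDiff ℝ 2 (G₁ - G₀) := hG₁.contDiff.sub hG₀.contDiff
  have hHK (w : ι → ℂ) (hw : w ∉ K) :
      (G₁ - G₀) w ⬝ᵥ (fun i => algebraMap ℂ A (w i) - a i) = 0 := by
    rw [Pi.sub_apply, dotProduct_comm, dotProduct_sub, hG₀.dotProduct_eq_one w hw,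
      hG₁.dotProduct_eq_one w hw, sub_self]
  have hqK (w : ι → ℂ) (hw : w ∉ K) (t : ℝ) : q w t = 0 :=
    (hG₀.lineMap hG₁ t).sum_det_updateRow_dbarMatrix_eq_zero hK.isClosed (hH.of_le one_le_two)
      hHK hw
  have hq : Continuous (Function.uncurry q) := continuous_finsetSum _ fun j _ =>
    continuous_det_updateRow_dbarMatrix_lineMap (hG₀.contDiff.of_le one_le_two)
      (hG₁.contDiff.of_le one_le_two) (contDiff_dbar (m := 0) hH (by norm_num) _).continuous j
  have hfq : Continuous (Function.uncurry fun w t => f w • q w t) :=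
    continuous_smul_of_forall_notMem_eq_zero (hU.prod isOpen_univ)
      (hf.continuousOn.comp continuousOn_fst fun p hp => hp.1) hq (hK.isClosed.prod isClosed_univ)
      (Set.prod_mono_left hKU) fun p hp => hqK p.1 (fun h => hp ⟨h, trivial⟩) p.2
  have hderiv (w : ι → ℂ) (t : ℝ) :=
    (hasDerivAt_det_dbarMatrix_lineMap (hG₀.contDiff.differentiable two_ne_zero w)
      (hG₁.contDiff.differentiable two_ne_zero w) t).const_smul (f w)
  have hint (t : ℝ) :=
    (hG₀.lineMap hG₁ t).integrable_smul_det_dbarMatrix hU hf.continuousOn hK hKU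
  simpa using integral_eq_integral_of_hasDerivAt hfq hK
    (fun w hw t => by rw [hqK w hw t, smul_zero]) hderiv
    (fun t => (hG₀.lineMap hG₁ t).integral_smul_sum_det_updateRow_dbarMatrix_eq_zero hU hf hK hKU
      (hH.of_le one_le_two) hHK) (hint 0) (hint 1)

end Homotopy

section CutoffCauchyKernel

/-- A smooth profile on the squared radius: `0` for `s ≤ r² / 2` and `1` for `r² ≤ s`. -/
def cutoffProfile (r s : ℝ) : ℝ :=
  Real.smoothTransition (2 * s / r ^ 2 - 1)

/-- The Cauchy kernel `1 / ζ`, smoothly cut off near its pole. -/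
def cutoffCauchyKernel (r : ℝ) (ζ : ℂ) : ℂ :=
  cutoffProfile r (‖ζ‖ ^ 2) / ζ

variable {r : ℝ}

theorem contDiff_cutoffProfile (r : ℝ) {n : ℕ∞} : ContDiff ℝ n (cutoffProfile r) :=
  Real.smoothTransition.contDiff.comp (by fun_prop)

theorem deriv_cutoffProfile_nonneg (r s : ℝ) : 0 ≤ deriv (cutoffProfile r) s :=
  Monotone.deriv_nonneg fun a b hab => Real.smoothTransition.monotone (by gcongr)

theorem cutoffProfile_le_one (r s : ℝ) : cutoffProfile r s ≤ 1 :=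
  Real.smoothTransition.le_one _

theorem cutoffProfile_eq_one {s : ℝ} (hr : 0 < r) (hs : r ^ 2 ≤ s) : cutoffProfile r s = 1 := by
  refine Real.smoothTransition.one_of_one_le ?_
  have : 1 ≤ s / r ^ 2 := (one_le_div (by positivity)).2 hs
  rw [mul_div_assoc]
  linarith

theorem cutoffProfile_eventuallyEq_zero (r : ℝ) : cutoffProfile r =ᶠ[𝓝 0] fun _ => 0 := by
  have hlim : Tendsto (fun s : ℝ => 2 * s / r ^ 2 - 1) (𝓝 0) (𝓝 (-1)) := by
    have hcont : Continuous fun s : ℝ => 2 * s / r ^ 2 - 1 := by fun_prop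
    simpa using hcont.tendsto 0
  filter_upwards [hlim.eventually_lt_const (by norm_num : (-1 : ℝ) < 0)] with s hs
  exact Real.smoothTransition.zero_of_nonpos hs.le

theorem exists_deriv_cutoffProfile_pos (hr : 0 < r) :
    ∃ s, 0 ≤ s ∧ cutoffProfile r s < 1 ∧ 0 < deriv (cutoffProfile r) s := by
  have hlt {s : ℝ} (hs : s < r ^ 2) : cutoffProfile r s < 1 := by
    refine Real.smoothTransition.lt_one_of_lt_one ?_
    have : s / r ^ 2 < 1 := (div_lt_one (by positivity)).2 hs
    rw [mul_div_assoc]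
    linarith
  obtain ⟨s, hs, hslope⟩ := exists_deriv_eq_slope (cutoffProfile r) (a := 0) (b := r ^ 2)
    (by positivity) (contDiff_cutoffProfile r (n := 1)).continuous.continuousOn
    ((contDiff_cutoffProfile r (n := 1)).differentiable one_ne_zero).differentiableOn
  refine ⟨s, hs.1.le, hlt hs.2, ?_⟩
  rw [hslope, cutoffProfile_eq_one hr le_rfl, sub_zero]
  exact div_pos (sub_pos.2 (hlt (by positivity))) (by positivity)

theorem dbar_one_comp_norm_sq {φ : ℝ → ℝ} {ζ : ℂ} (hφ : DifferentiableAt ℝ φ (‖ζ‖ ^ 2)) :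
    dbar 1 (fun x : ℂ => (φ (‖x‖ ^ 2) : ℂ)) ζ = 2 * deriv φ (‖ζ‖ ^ 2) * ζ := by
  have hnorm : HasFDerivAt (fun x : ℂ => ‖x‖ ^ 2) (2 • innerSL ℝ ζ) ζ :=
    (hasStrictFDerivAt_norm_sq ζ).hasFDerivAt
  refine (dbar_of_hasFDerivAt (Complex.ofRealCLM.hasFDerivAt.comp ζ
    (hφ.hasDerivAt.comp_hasFDerivAt ζ hnorm)) 1).trans ?_
  apply Complex.ext <;> simp [Complex.inner] <;> ring

theorem cutoffProfile_norm_sq_eventuallyEq_zero (r : ℝ) :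
    ∀ᶠ ζ : ℂ in 𝓝 0, cutoffProfile r (‖ζ‖ ^ 2) = 0 := by
  have hnorm : Tendsto (fun ζ : ℂ => ‖ζ‖ ^ 2) (𝓝 0) (𝓝 0) := by
    have hcont : Continuous fun ζ : ℂ => ‖ζ‖ ^ 2 := by fun_prop
    simpa using hcont.tendsto 0
  exact hnorm.eventually (cutoffProfile_eventuallyEq_zero r)

theorem cutoffCauchyKernel_eventuallyEq_zero (r : ℝ) :
    cutoffCauchyKernel r =ᶠ[𝓝 0] fun _ => 0 := by
  filter_upwards [cutoffProfile_norm_sq_eventuallyEq_zero r] with ζ hζ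
  simp [cutoffCauchyKernel, hζ]

theorem mul_cutoffCauchyKernel (r : ℝ) (ζ : ℂ) :
    ζ * cutoffCauchyKernel r ζ = cutoffProfile r (‖ζ‖ ^ 2) := by
  rcases eq_or_ne ζ 0 with rfl | hζ
  · rw [(cutoffProfile_norm_sq_eventuallyEq_zero r).self_of_nhds, zero_mul, Complex.ofReal_zero]
  · exact mul_div_cancel₀ _ hζ

theorem contDiff_ofReal_cutoffProfile_norm_sq (r : ℝ) {n : ℕ∞} :
    ContDiff ℝ n fun ζ : ℂ => (cutoffProfile r (‖ζ‖ ^ 2) : ℂ) :=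
  Complex.ofRealCLM.contDiff.comp ((contDiff_cutoffProfile r).comp (contDiff_norm_sq ℝ))

theorem contDiff_cutoffCauchyKernel (r : ℝ) {n : ℕ∞} :
    ContDiff ℝ n (cutoffCauchyKernel r) := by
  refine contDiff_iff_contDiffAt.2 fun ζ => ?_
  rcases eq_or_ne ζ 0 with rfl | hζ
  · exact contDiffAt_const.congr_of_eventuallyEq (cutoffCauchyKernel_eventuallyEq_zero r)
  · exact (contDiff_ofReal_cutoffProfile_norm_sq r).contDiffAt.mul (contDiffAt_id.inv hζ)

theorem dbar_cutoffCauchyKernel (r : ℝ) (ζ : ℂ) :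
    dbar 1 (cutoffCauchyKernel r) ζ = 2 * deriv (cutoffProfile r) (‖ζ‖ ^ 2) := by
  rcases eq_or_ne ζ 0 with rfl | hζ
  · rw [dbar_congr_of_eventuallyEq (cutoffCauchyKernel_eventuallyEq_zero r), dbar_const]
    simp [(cutoffProfile_eventuallyEq_zero r).deriv_eq]
  · have hprofile : DifferentiableAt ℝ (cutoffProfile r) (‖ζ‖ ^ 2) :=
      (contDiff_cutoffProfile r (n := 1)).differentiable one_ne_zero _
    have hkernel : DifferentiableAt ℝ (cutoffCauchyKernel r) ζ :=
      (contDiff_cutoffCauchyKernel r (n := 1)).differentiable one_ne_zero ζ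
    have hmul : dbar 1 (fun x => x * cutoffCauchyKernel r x) ζ =
        ζ * dbar 1 (cutoffCauchyKernel r) ζ := by
      rw [dbar_mul differentiableAt_fun_id hkernel,
        dbar_eq_zero_of_differentiableAt differentiableAt_fun_id, zero_mul, add_zero]
    simp only [mul_cutoffCauchyKernel r] at hmul
    refine mul_left_cancel₀ hζ (hmul.symm.trans ?_)
    rw [dbar_one_comp_norm_sq hprofile, mul_comm]

end CutoffCauchyKernel

section PolydiscSection

variable {ι : Type*} [Fintype ι] [LinearOrder ι] {r : ℝ}

/-- A Leray section for the point `z` off the polydisc of radius `r` about `z`, built from the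
one-variable kernels so that its `∂̄`-matrix is triangular. -/
def polydiscSection (r : ℝ) (z w : ι → ℂ) (i : ι) : ℂ :=
  cutoffCauchyKernel r (w i - z i) *
    ∏ j with j < i, (1 - (cutoffProfile r (‖w j - z j‖ ^ 2) : ℂ))

/-- The determinant of the `∂̄`-matrix of `polydiscSection r z`, as a function of `w - z`. -/
def polydiscDensity (r : ℝ) (x : ι → ℂ) : ℝ :=
  ∏ i, 2 * deriv (cutoffProfile r) (‖x i‖ ^ 2) * ∏ j with j < i, (1 - cutoffProfile r (‖x j‖ ^ 2))

theorem contDiff_prod_one_sub_cutoffProfile (r : ℝ) (z : ι → ℂ) (i : ι) {n : ℕ∞} :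
    ContDiff ℝ n fun w : ι → ℂ =>
      ∏ j with j < i, (1 - (cutoffProfile r (‖w j - z j‖ ^ 2) : ℂ)) :=
  contDiff_prod fun j _ => contDiff_const.sub
    ((contDiff_ofReal_cutoffProfile_norm_sq r).comp ((contDiff_apply ℝ ℂ j).sub contDiff_const))

theorem contDiff_polydiscSection (r : ℝ) (z : ι → ℂ) {n : ℕ∞} :
    ContDiff ℝ n (polydiscSection r z) :=
  contDiff_pi.2 fun i => ((contDiff_cutoffCauchyKernel r).comp
    ((contDiff_apply ℝ ℂ i).sub contDiff_const)).mul (contDiff_prod_one_sub_cutoffProfile r z i)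

theorem isLeraySection_polydiscSection (hr : 0 < r) (z : ι → ℂ) :
    IsLeraySection z (closedBall z r) (polydiscSection r z) where
  contDiff := contDiff_polydiscSection r z
  dotProduct_eq_one w hw := by
    obtain ⟨i, hi⟩ : ∃ i, r < dist (w i) (z i) := by
      simpa [dist_pi_le_iff hr.le] using hw
    have hone : cutoffProfile r (‖w i - z i‖ ^ 2) = 1 := by
      rw [← dist_eq_norm]
      exact cutoffProfile_eq_one hr (by gcongr)
    have hprod : ∏ j, (1 - (cutoffProfile r (‖w j - z j‖ ^ 2) : ℂ)) = 0 :=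
      Finset.prod_eq_zero (Finset.mem_univ i) (by simp [hone])
    rw [Finset.prod_one_sub_ordered, sub_eq_zero] at hprod
    refine Eq.trans (Finset.sum_congr rfl fun j _ => ?_) hprod.symm
    rw [← mul_cutoffCauchyKernel, mul_assoc]
    rfl

theorem dbarMatrix_polydiscSection_of_lt (r : ℝ) (z w : ι → ℂ) {i j : ι} (hij : i < j) :
    dbarMatrix (polydiscSection r z) w j i = 0 := by
  have hG := (contDiff_polydiscSection r z (n := 1)).differentiable one_ne_zero w
  refine (dbar_apply hG _ i).trans
    (dbar_eq_zero_of_forall_add_smul (differentiableAt_pi.1 hG i) fun t => ?_)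
  refine congrArg₂ (· * ·) (by simp [hij.ne]) (Finset.prod_congr rfl fun k hk => ?_)
  simp [((Finset.mem_filter.1 hk).2.trans hij).ne]

theorem dbarMatrix_polydiscSection_self (r : ℝ) (z w : ι → ℂ) (i : ι) :
    dbarMatrix (polydiscSection r z) w i i = 2 * deriv (cutoffProfile r) (‖w i - z i‖ ^ 2) *
      ∏ j with j < i, (1 - (cutoffProfile r (‖w j - z j‖ ^ 2) : ℂ)) := by
  have hG := (contDiff_polydiscSection r z (n := 1)).differentiable one_ne_zero w
  have hprod := (contDiff_prod_one_sub_cutoffProfile r z i (n := 1)).differentiable one_ne_zero w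
  have hkernel : DifferentiableAt ℝ (cutoffCauchyKernel r) (w i - z i) :=
    (contDiff_cutoffCauchyKernel r (n := 1)).differentiable one_ne_zero _
  have hcoord : HasFDerivAt (fun x : ι → ℂ => x i - z i)
      (ContinuousLinearMap.proj (R := ℂ) (φ := fun _ : ι => ℂ) i) w :=
    (hasFDerivAt_apply i w).sub_const _
  have hcomp : DifferentiableAt ℝ (fun x : ι → ℂ => cutoffCauchyKernel r (x i - z i)) w :=
    hkernel.fun_comp' w (hcoord.differentiableAt.restrictScalars ℝ)
  have hprod_dbar : dbar (Pi.single i 1) (fun x : ι → ℂ =>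
      ∏ j with j < i, (1 - (cutoffProfile r (‖x j - z j‖ ^ 2) : ℂ))) w = 0 :=
    dbar_eq_zero_of_forall_add_smul hprod fun t => Finset.prod_congr rfl fun k hk => by
      simp [(Finset.mem_filter.1 hk).2.ne]
  refine (dbar_apply hG _ i).trans ?_
  simp only [polydiscSection]
  rw [dbar_mul hcomp hprod, hprod_dbar,
    dbar_comp_differentiableAt_right hcoord.differentiableAt hkernel, hcoord.fderiv]
  simp [dbar_cutoffCauchyKernel r]

theorem det_dbarMatrix_polydiscSection (r : ℝ) (z w : ι → ℂ) :
    (dbarMatrix (polydiscSection r z) w).det = polydiscDensity r (w - z) := by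
  have hupper : (dbarMatrix (polydiscSection r z) w).IsUpperTriangular :=
    fun _ _ hij => dbarMatrix_polydiscSection_of_lt r z w hij
  rw [Matrix.det_of_isUpperTriangular hupper]
  simp [dbarMatrix_polydiscSection_self r, polydiscDensity]

theorem polydiscDensity_nonneg (r : ℝ) (x : ι → ℂ) : 0 ≤ polydiscDensity r x :=
  Finset.prod_nonneg fun _ _ => mul_nonneg
    (mul_nonneg zero_le_two (deriv_cutoffProfile_nonneg r _))
    (Finset.prod_nonneg fun _ _ => sub_nonneg.2 (cutoffProfile_le_one r _))

theorem exists_polydiscDensity_pos (hr : 0 < r) : ∃ x : ι → ℂ, 0 < polydiscDensity r x := by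
  obtain ⟨s, hs, hlt, hderiv⟩ := exists_deriv_cutoffProfile_pos hr
  have hsq : ‖(√s : ℂ)‖ ^ 2 = s := by simp [hs]
  refine ⟨fun _ => √s, ?_⟩
  simp only [polydiscDensity, hsq]
  exact Finset.prod_pos fun _ _ => mul_pos (mul_pos two_pos hderiv)
    (Finset.prod_pos fun _ _ => sub_pos.2 hlt)

theorem continuous_polydiscDensity (r : ℝ) : Continuous (polydiscDensity (ι := ι) r) := by
  have hprofile := (contDiff_cutoffProfile r (n := 1)).continuous
  have hderiv := (contDiff_cutoffProfile r (n := 1)).continuous_deriv le_rfl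
  unfold polydiscDensity
  fun_prop

theorem polydiscDensity_eq_zero (hr : 0 < r) {x : ι → ℂ} (hx : x ∉ closedBall 0 r) :
    polydiscDensity r x = 0 := by
  have hdet := (isLeraySection_polydiscSection hr 0).det_dbarMatrix_eq_zero isClosed_closedBall hx
  rw [det_dbarMatrix_polydiscSection r, sub_zero] at hdet
  exact_mod_cast hdet

theorem integrable_polydiscDensity (hr : 0 < r) : Integrable (polydiscDensity (ι := ι) r) :=
  (continuous_polydiscDensity r).integrable_of_hasCompactSupport <|
    HasCompactSupport.intro (isCompact_closedBall 0 r) fun _ => polydiscDensity_eq_zero hr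

theorem integral_polydiscDensity_pos (hr : 0 < r) :
    0 < ∫ x : ι → ℂ, polydiscDensity r x := by
  obtain ⟨x, hx⟩ := exists_polydiscDensity_pos (ι := ι) hr
  exact integral_pos_of_integrable_nonneg_nonzero (continuous_polydiscDensity r)
    (integrable_polydiscDensity hr) (polydiscDensity_nonneg r) hx.ne'

theorem integral_polydiscDensity_eq {r' : ℝ} (hr : 0 < r) (hr' : 0 < r') :
    ∫ x : ι → ℂ, polydiscDensity r x = ∫ x : ι → ℂ, polydiscDensity r' x := by
  have hsection {ρ : ℝ} (hρ : 0 < ρ) (hle : ρ ≤ max r r') :=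
    (isLeraySection_polydiscSection (ι := ι) hρ 0).mono (closedBall_subset_closedBall hle)
  have heq := (hsection hr (le_max_left _ _)).integral_smul_det_dbarMatrix_eq
    (hsection hr' (le_max_right _ _)) isOpen_univ (differentiableOn_const (1 : ℂ))
    (isCompact_closedBall _ _) (subset_univ _)
  simp only [det_dbarMatrix_polydiscSection r, det_dbarMatrix_polydiscSection r', sub_zero,
    one_smul, integral_complex_ofReal] at heq
  exact_mod_cast heq

end PolydiscSection

section CauchyFantappie

theorem norm_integral_smul_sub_le {X F : Type*} [MeasurableSpace X] {μ : Measure X}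
    [NormedAddCommGroup F] [NormedSpace ℝ F] [CompleteSpace F] {ρ : X → ℝ} {g : X → F} {y : F}
    {ε : ℝ} (hρ₀ : ∀ x, 0 ≤ ρ x) (hρ : Integrable ρ μ) (hρg : Integrable (fun x => ρ x • g x) μ)
    (hg : ∀ x, ρ x ≠ 0 → ‖g x - y‖ ≤ ε) :
    ‖∫ x, ρ x • g x ∂μ - (∫ x, ρ x ∂μ) • y‖ ≤ ε * ∫ x, ρ x ∂μ := by
  rw [← integral_smul_const, ← integral_sub hρg (hρ.smul_const y), ← integral_const_mul]
  refine norm_integral_le_of_norm_le (hρ.const_mul ε) (Eventually.of_forall fun x => ?_)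
  rw [← smul_sub, norm_smul, Real.norm_of_nonneg (hρ₀ x), mul_comm]
  rcases eq_or_ne (ρ x) 0 with hx | hx
  · simp [hx]
  · exact mul_le_mul_of_nonneg_right (hg x hx) (hρ₀ x)

variable {ι : Type*} [Fintype ι] [LinearOrder ι]

/-- The **Cauchy–Fantappiè formula**. -/
theorem IsLeraySection.integral_smul_det_dbarMatrix {z : ι → ℂ} {K U : Set (ι → ℂ)}
    {G : (ι → ℂ) → ι → ℂ} {f : (ι → ℂ) → ℂ} (hG : IsLeraySection z K G) (hU : IsOpen U)
    (hf : DifferentiableOn ℂ f U) (hK : IsCompact K) (hKU : K ⊆ U) (hz : z ∈ interior K) :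
    ∫ w, f w • (dbarMatrix G w).det = (∫ x : ι → ℂ, polydiscDensity 1 x) • f z := by
  have hc := integral_polydiscDensity_pos (ι := ι) one_pos
  set c := ∫ x : ι → ℂ, polydiscDensity 1 x
  refine eq_of_forall_dist_le fun ε hε => ?_
  have hcont : ContinuousAt f z :=
    hf.continuousOn.continuousAt (hU.mem_nhds (hKU (interior_subset hz)))
  obtain ⟨r, hr, hrK⟩ := nhds_basis_closedBall.mem_iff.1 (inter_mem
    (mem_interior_iff_mem_nhds.1 hz) (hcont (closedBall_mem_nhds (f z) (div_pos hε hc))))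
  have hpolydisc := (isLeraySection_polydiscSection hr z).mono fun w hw => (hrK hw).1
  have hint := hpolydisc.integrable_smul_det_dbarMatrix hU hf.continuousOn hK hKU
  have hmass : ∫ w, polydiscDensity r (w - z) = c :=
    (integral_sub_right_eq_self _ z).trans (integral_polydiscDensity_eq hr one_pos)
  have hclose (w : ι → ℂ) (hw : polydiscDensity r (w - z) ≠ 0) : ‖f w - f z‖ ≤ ε / c := by
    rw [← dist_eq_norm]
    refine (hrK ?_).2
    rw [mem_closedBall_iff_norm, ← mem_closedBall_zero_iff]
    exact of_not_not fun hmem => hw (polydiscDensity_eq_zero hr hmem)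
  rw [hG.integral_smul_det_dbarMatrix_eq hpolydisc hU hf hK hKU, dist_eq_norm]
  simp only [det_dbarMatrix_polydiscSection, smul_eq_mul, mul_comm (f _),
    ← Complex.real_smul] at hint ⊢
  rw [← hmass]
  refine (norm_integral_smul_sub_le (fun w => polydiscDensity_nonneg r _)
    ((integrable_polydiscDensity hr).comp_sub_right z) hint hclose).trans_eq ?_
  rw [hmass, div_mul_cancel₀ _ hc.ne']

end CauchyFantappie

section FunctionalCalculus

open WeakDual

open scoped Manifold

variable {ι A : Type*} [Fintype ι] [NormedCommRing A]

theorem exists_contDiffOn_dotProduct_eq_one {𝕜 E : Type*} [NontriviallyNormedField 𝕜]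
    [NormedAddCommGroup E] [NormedSpace 𝕜 E] [NormedAlgebra 𝕜 A] [CompleteSpace A]
    {n : WithTop ℕ∞} {u : E → ι → A} (hu : ContDiff 𝕜 n u) {x : E} {b : ι → A}
    (hb : u x ⬝ᵥ b = 1) :
    ∃ V ∈ 𝓝 x, ∃ g : E → ι → A, ContDiffOn 𝕜 n g V ∧ ∀ y ∈ V, u y ⬝ᵥ g y = 1 := by
  have hub : ContDiff 𝕜 n fun y => u y ⬝ᵥ b :=
    ContDiff.sum fun i _ => (contDiff_pi.1 hu i).mul contDiff_const
  refine ⟨{y | IsUnit (u y ⬝ᵥ b)}, (Units.isOpen.preimage hub.continuous).mem_nhds ?_,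
    fun y => Ring.inverse (u y ⬝ᵥ b) • b, ?_, fun y hy => ?_⟩
  · change IsUnit (u x ⬝ᵥ b)
    exact hb ▸ isUnit_one
  · rintro y ⟨v, hv⟩
    have hinverse : ContDiffAt 𝕜 n Ring.inverse (u y ⬝ᵥ b) := hv ▸ contDiffAt_ringInverse 𝕜 v
    exact ContDiffAt.contDiffWithinAt <| contDiffAt_pi.2 fun i =>
      (hinverse.comp y hub.contDiffAt).mul contDiffAt_const
  · rw [dotProduct_smul, smul_eq_mul, Ring.inverse_mul_cancel _ hy]

variable [NormedAlgebra ℂ A]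

theorem exists_isLeraySection [CompleteSpace A] (a : ι → A) {K : Set (ι → ℂ)}
    (h : ∀ w ∉ interior K, ∃ b : ι → A, (fun i => algebraMap ℂ A (w i) - a i) ⬝ᵥ b = 1) :
    ∃ G, IsLeraySection a K G := by
  let u (w : ι → ℂ) (i : ι) : A := algebraMap ℂ A (w i) - a i
  have hu : ContDiff ℝ (2 : ℕ∞) u := contDiff_pi.2 fun i =>
    (((algebraMapCLM ℂ A).restrictScalars ℝ).contDiff.comp (contDiff_apply ℝ ℂ i)).sub
      contDiff_const
  let t (w : ι → ℂ) : Set (ι → A) := {x | w ∉ K → u w ⬝ᵥ x = 1}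
  have ht (w : ι → ℂ) : Convex ℝ (t w) := fun x hx y hy r s _ _ hrs hw => by
    rw [dotProduct_add, dotProduct_smul, dotProduct_smul, hx hw, hy hw, ← add_smul, hrs, one_smul]
  have hlocal (w : ι → ℂ) : ∃ V ∈ 𝓝 w, ∃ g : (ι → ℂ) → ι → A,
      ContMDiffOn 𝓘(ℝ, ι → ℂ) 𝓘(ℝ, ι → A) (2 : ℕ∞) g V ∧ ∀ y ∈ V, g y ∈ t y := by
    by_cases hw : w ∈ interior K
    · exact ⟨interior K, isOpen_interior.mem_nhds hw, fun _ => 0, contMDiffOn_const,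
        fun y hy hyK => absurd (interior_subset hy) hyK⟩
    · obtain ⟨b, hb⟩ := h w hw
      obtain ⟨V, hV, g, hg, hgV⟩ := exists_contDiffOn_dotProduct_eq_one hu hb
      exact ⟨V, hV, g, hg.contMDiffOn, fun y hy _ => hgV y hy⟩
  obtain ⟨G, hG⟩ := exists_contMDiffMap_forall_mem_convex_of_local 𝓘(ℝ, ι → ℂ) ht hlocal
  exact ⟨G, G.contMDiff.contDiff, fun w hw => hG w hw⟩

theorem exists_dotProduct_eq_one_of_notMem_range [CompleteSpace A] {a : ι → A} {w : ι → ℂ}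
    (hw : w ∉ range fun (φ : characterSpace ℂ A) i => φ (a i)) :
    ∃ b : ι → A, (fun i => algebraMap ℂ A (w i) - a i) ⬝ᵥ b = 1 := by
  by_contra hb
  have hI : Ideal.span (range fun i => algebraMap ℂ A (w i) - a i) ≠ ⊤ := fun htop => by
    obtain ⟨b, hsum⟩ := Ideal.mem_span_range_iff_exists_fun.1 ((Ideal.eq_top_iff_one _).1 htop)
    exact hb ⟨b, (dotProduct_comm _ _).trans hsum⟩
  obtain ⟨m, hm, hIm⟩ := Ideal.exists_le_maximal _ hI
  refine hw ⟨m.toCharacterSpace, funext fun i => ?_⟩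
  have hzero := m.toCharacterSpace_apply_eq_zero_of_mem
    (hIm (Ideal.subset_span (mem_range_self (f := fun i => algebraMap ℂ A (w i) - a i) i)))
  rw [map_sub, AlgHomClass.commutes, sub_eq_zero] at hzero
  exact hzero.symm

section Map

variable {B : Type*} [NormedCommRing B] [NormedAlgebra ℂ B] {G : (ι → ℂ) → ι → A}

theorem IsLeraySection.map {a : ι → A} {K : Set (ι → ℂ)} (hG : IsLeraySection a K G)
    (φ : A →A[ℂ] B) : IsLeraySection (fun i => φ (a i)) K fun w i => φ (G w i) where
  contDiff := contDiff_pi.2 fun i =>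
    (φ.toContinuousLinearMap.restrictScalars ℝ).contDiff.comp (contDiff_pi.1 hG.contDiff i)
  dotProduct_eq_one w hw := by
    simpa [dotProduct, AlgHomClass.commutes] using congrArg φ (hG.dotProduct_eq_one w hw)

theorem det_dbarMatrix_map [DecidableEq ι] {w : ι → ℂ} (hG : DifferentiableAt ℝ G w)
    (φ : A →A[ℂ] B) : (dbarMatrix (fun x i => φ (G x i)) w).det = φ (dbarMatrix G w).det := by
  have hGi (i : ι) : DifferentiableAt ℝ (fun x => G x i) w := differentiableAt_pi.1 hG i
  have hφG : DifferentiableAt ℝ (fun x i => φ (G x i)) w := differentiableAt_pi.2 fun i =>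
    (φ.toContinuousLinearMap.restrictScalars ℝ).differentiableAt.comp w (hGi i)
  refine Eq.trans (congrArg Matrix.det ?_) ((φ : A →ₐ[ℂ] B).map_det _).symm
  ext j i
  change dbar (Pi.single j 1) (fun x i => φ (G x i)) w i = φ (dbar (Pi.single j 1) G w i)
  rw [dbar_apply hφG, dbar_apply hG]
  exact dbar_clm_apply φ.toContinuousLinearMap (hGi i) _

end Map

variable [CompleteSpace A]

/-- The **holomorphic functional calculus** in several variables. The element is the
Cauchy–Fantappiè integral of a Leray section with values in `A`. -/
theorem exists_forall_character_apply_eq {ι : Type*} [Finite ι] (a : ι → A) {f : (ι → ℂ) → ℂ}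
    {U : Set (ι → ℂ)} (hU : IsOpen U) (hf : DifferentiableOn ℂ f U)
    (ha : ∀ φ : characterSpace ℂ A, (fun i => φ (a i)) ∈ U) :
    ∃ b : A, ∀ φ : characterSpace ℂ A, φ b = f fun i => φ (a i) := by
  have := Fintype.ofFinite ι
  let _ : LinearOrder ι := IsWellOrder.linearOrder WellOrderingRel
  have hcont : Continuous fun (φ : characterSpace ℂ A) i => φ (a i) :=
    continuous_pi fun i => (WeakDual.eval_continuous (a i)).comp continuous_subtype_val
  obtain ⟨K, hK, hσK, hKU⟩ := exists_compact_between (isCompact_range hcont) hU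
    (range_subset_iff.2 ha)
  obtain ⟨G, hG⟩ := exists_isLeraySection a (K := K) fun w hw =>
    exists_dotProduct_eq_one_of_notMem_range fun h => hw (hσK h)
  have hint := hG.integrable_smul_det_dbarMatrix hU hf.continuousOn hK hKU
  let c : ℝ := ∫ x : ι → ℂ, polydiscDensity 1 x
  have hc : c ≠ 0 := (integral_polydiscDensity_pos one_pos).ne'
  refine ⟨c⁻¹ • ∫ w, f w • (dbarMatrix G w).det, fun φ => ?_⟩
  let T : A →A[ℂ] ℂ := { CharacterSpace.toAlgHom φ with cont := map_continuous φ }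
  have hT := (hG.map T).integral_smul_det_dbarMatrix hU hf hK hKU (hσK (mem_range_self φ))
  simp only [det_dbarMatrix_map (hG.contDiff.differentiable two_ne_zero _)] at hT
  calc T (c⁻¹ • ∫ w, f w • (dbarMatrix G w).det) = c⁻¹ • ∫ w, f w • T (dbarMatrix G w).det := by
        rw [← T.coe_toContinuousLinearMap, T.toContinuousLinearMap.map_smul_of_tower,
          ← T.toContinuousLinearMap.integral_comp_comm hint]
        simp only [map_smul]
    _ = f fun i => φ (a i) := by
        rw [hT, inv_smul_smul₀ hc]
        rfl

end FunctionalCalculus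

section CharacterHull

/-- The hull of a set `Ψ` of characters: those dominated in modulus by the supremum over `Ψ`, on
every element of the algebra. For evaluations of polynomials it is the polynomial hull. -/
def characterHull {A : Type*} [Semiring A] [Algebra ℂ A] (Ψ : Set (A →ₐ[ℂ] ℂ)) : Set (A →ₐ[ℂ] ℂ) :=
  {φ | ∀ (g : A) (C : ℝ), 0 ≤ C → (∀ ψ ∈ Ψ, ‖ψ g‖ ≤ C) → ‖φ g‖ ≤ C}

theorem algHom_aeval_eq_eval {A σ : Type*} [CommRing A] [Algebra ℂ A] (φ : A →ₐ[ℂ] ℂ) (a : σ → A)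
    (p : MvPolynomial σ ℂ) : φ (aeval a p) = eval (fun i => φ (a i)) p := by
  rw [← coe_aeval_eq_eval]
  exact comp_aeval_apply a φ p

theorem IsPolyConvex.toLp_mem_of_mem_characterHull {A : Type*} [CommRing A] [Algebra ℂ A] {n : ℕ}
    {K : Set (EuclideanSpace ℂ (Fin n))} (hKpc : IsPolyConvex K) (hK : IsCompact K)
    {Ψ : Set (A →ₐ[ℂ] ℂ)} {φ : A →ₐ[ℂ] ℂ} (hφ : φ ∈ characterHull Ψ) {a : Fin n → A}
    (ha : ∀ ψ ∈ Ψ, WithLp.toLp 2 (fun i => ψ (a i)) ∈ K) :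
    WithLp.toLp 2 (fun i => φ (a i)) ∈ K := by
  refine Eq.subset hKpc fun p => ?_
  have hbdd : BddAbove ((fun w => ‖eval (fun i => w i) p‖) '' K) :=
    (hK.image (p.continuous_eval.comp (PiLp.continuous_ofLp 2 _)).norm).bddAbove
  rw [← algHom_aeval_eq_eval]
  refine hφ _ _ (Real.sSup_nonneg (forall_mem_image.2 fun _ _ => norm_nonneg _)) fun ψ hψ => ?_
  rw [algHom_aeval_eq_eval]
  exact le_csSup hbdd ⟨_, ha ψ hψ, rfl⟩

theorem subset_polyHull2 {N n : ℕ} {S : Set (EuclideanSpace ℂ (Fin N) × EuclideanSpace ℂ (Fin n))}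
    (hS : IsCompact S) : S ⊆ polyHull2 S := by
  intro s hs p
  have hcont : Continuous fun w : EuclideanSpace ℂ (Fin N) × EuclideanSpace ℂ (Fin n) =>
      ‖eval (Sum.elim (fun i => w.1 i) (fun j => w.2 j)) p‖ := by
    refine (p.continuous_eval.comp (continuous_pi ?_)).norm
    rintro (i | j) <;> dsimp only [Sum.elim_inl, Sum.elim_inr] <;> fun_prop
  exact le_csSup (hS.image hcont).bddAbove (mem_image_of_mem _ hs)

end CharacterHull

section FunctionAlgebra

open WeakDual

variable {X : Type*} [TopologicalSpace X]

/-- Evaluation at a point, as a character of an algebra of continuous functions. -/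
def evalCharacter (A : Subalgebra ℂ C(X, ℂ)) (x : X) : A →ₐ[ℂ] ℂ :=
  (ContinuousMap.evalAlgHom ℂ ℂ x).comp A.val

variable [CompactSpace X]

theorem mem_characterHull_range_evalCharacter {A : Subalgebra ℂ C(X, ℂ)}
    (hA : IsClosed (A : Set C(X, ℂ))) (φ : A →ₐ[ℂ] ℂ) :
    φ ∈ characterHull (range (evalCharacter A)) := by
  intro g C hC hg
  have : CompleteSpace A := hA.completeSpace_coe
  have hnorm : ‖g‖ ≤ C :=
    (ContinuousMap.norm_le (g : C(X, ℂ)) hC).2 fun x => hg _ (mem_range_self x)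
  have hone : ‖(1 : A)‖ ≤ 1 := (ContinuousMap.norm_le _ zero_le_one).2 fun _ => by simp
  calc ‖φ g‖ ≤ ‖g‖ * ‖(1 : A)‖ := AlgHom.norm_apply_le_self_mul_norm_one φ g
    _ ≤ C * 1 := by gcongr
    _ = C := mul_one C

theorem evalCharacter_topologicalClosure_mem_characterHull {A : Subalgebra ℂ C(X, ℂ)} {S : Set X}
    {x : X} (hx : evalCharacter A x ∈ characterHull (evalCharacter A '' S)) :
    evalCharacter A.topologicalClosure x ∈
      characterHull (evalCharacter A.topologicalClosure '' S) := by
  intro g C hC hg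
  refine le_of_forall_pos_le_add fun ε hε => ?_
  obtain ⟨h, hhA, hgh⟩ := Metric.mem_closure_iff.1 g.2 (ε / 2) (half_pos hε)
  have hclose (y : X) : ‖(g : C(X, ℂ)) y - h y‖ ≤ ε / 2 := by
    rw [← dist_eq_norm]
    exact (ContinuousMap.dist_apply_le_dist y).trans hgh.le
  have hhS : ∀ ψ ∈ evalCharacter A '' S, ‖ψ ⟨h, hhA⟩‖ ≤ C + ε / 2 :=
    forall_mem_image.2 fun y hy =>
      (norm_le_norm_add_norm_sub _ _).trans (add_le_add (hg _ (mem_image_of_mem _ hy)) (hclose y))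
  calc ‖(g : C(X, ℂ)) x‖ ≤ ‖h x‖ + ‖(g : C(X, ℂ)) x - h x‖ := norm_le_norm_add_norm_sub' _ _
    _ ≤ C + ε / 2 + ε / 2 := add_le_add (hx ⟨h, hhA⟩ _ (by positivity) hhS) (hclose x)
    _ = C + ε := by ring

theorem exists_forall_evalCharacter_eq {A : Subalgebra ℂ C(X, ℂ)}
    (hA : IsClosed (A : Set C(X, ℂ))) {N : ℕ} {L U : Set (EuclideanSpace ℂ (Fin N))}
    (hL : IsCompact L) (hLpc : IsPolyConvex L) (hU : IsOpen U) (hLU : L ⊆ U)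
    {g : EuclideanSpace ℂ (Fin N) → ℂ} (hg : DifferentiableOn ℂ g U) {a : Fin N → A}
    (ha : ∀ x, WithLp.toLp 2 (fun i => evalCharacter A x (a i)) ∈ L) :
    ∃ b : A, ∀ x, evalCharacter A x b = g (WithLp.toLp 2 fun i => evalCharacter A x (a i)) := by
  have : CompleteSpace A := hA.completeSpace_coe
  let e := (EuclideanSpace.equiv (Fin N) ℂ).symm
  have hspectrum (φ : characterSpace ℂ A) : e (fun i => φ (a i)) ∈ L :=
    hLpc.toLp_mem_of_mem_characterHull hL
      (mem_characterHull_range_evalCharacter hA (CharacterSpace.toAlgHom φ))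
      (forall_mem_range.2 ha)
  obtain ⟨b, hb⟩ := exists_forall_character_apply_eq a (hU.preimage e.continuous)
    (hg.comp e.differentiable.differentiableOn fun _ hw => hw) fun φ => hLU (hspectrum φ)
  exact ⟨b, fun x => hb (CharacterSpace.equivAlgHom.symm (evalCharacter A x))⟩

theorem toLp_add_mem_of_mem_characterHull {A : Subalgebra ℂ C(X, ℂ)}
    (hA : IsClosed (A : Set C(X, ℂ))) {N n : ℕ} {L U : Set (EuclideanSpace ℂ (Fin N))}
    {K : Set (EuclideanSpace ℂ (Fin n))} (hL : IsCompact L) (hLpc : IsPolyConvex L)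
    (hK : IsCompact K) (hKpc : IsPolyConvex K) (hU : IsOpen U) (hLU : L ⊆ U)
    {f : EuclideanSpace ℂ (Fin N) → EuclideanSpace ℂ (Fin n)} (hf : DifferentiableOn ℂ f U)
    {a : Fin N → A} (ha : ∀ x, WithLp.toLp 2 (fun i => evalCharacter A x (a i)) ∈ L)
    {c : Fin n → A} {S : Set X} {x : X}
    (hx : evalCharacter A x ∈ characterHull (evalCharacter A '' S))
    (hc : ∀ y ∈ S, WithLp.toLp 2 (fun j => evalCharacter A y (c j)) +
      f (WithLp.toLp 2 fun i => evalCharacter A y (a i)) ∈ K) :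
    WithLp.toLp 2 (fun j => evalCharacter A x (c j)) +
      f (WithLp.toLp 2 fun i => evalCharacter A x (a i)) ∈ K := by
  have hcomponent (j : Fin n) := exists_forall_evalCharacter_eq hA hL hLpc hU hLU
    ((EuclideanSpace.proj (𝕜 := ℂ) j).differentiable.comp_differentiableOn hf) ha
  choose b hb using hcomponent
  have hsum (y : X) : WithLp.toLp 2 (fun j => evalCharacter A y (c j + b j)) =
      WithLp.toLp 2 (fun j => evalCharacter A y (c j)) +
        f (WithLp.toLp 2 fun i => evalCharacter A y (a i)) := by
    ext j
    exact congrArg (evalCharacter A y (c j) + ·) (hb j y)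
  rw [← hsum]
  exact hKpc.toLp_mem_of_mem_characterHull hK hx
    (forall_mem_image.2 fun y hy => (hsum y).symm ▸ hc y hy)

end FunctionAlgebra

section PolynomialAlgebra

variable {N n : ℕ} {X S : Set (EuclideanSpace ℂ (Fin N) × EuclideanSpace ℂ (Fin n))}

/-- The coordinate functions of `ℂᴺ × ℂⁿ`, restricted to `X`. -/
def coordFun (X : Set (EuclideanSpace ℂ (Fin N) × EuclideanSpace ℂ (Fin n))) :
    Fin N ⊕ Fin n → C(X, ℂ) :=
  Sum.elim (fun i => ⟨fun x => x.1.1 i, by fun_prop⟩) (fun j => ⟨fun x => x.1.2 j, by fun_prop⟩)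

/-- The algebra of polynomial functions on `X`; its closure is the uniform algebra `P(X)`. -/
def polyFun (X : Set (EuclideanSpace ℂ (Fin N) × EuclideanSpace ℂ (Fin n))) :
    Subalgebra ℂ C(X, ℂ) :=
  (aeval (coordFun X)).range

theorem coordFun_mem_topologicalClosure_polyFun [CompactSpace X] (k : Fin N ⊕ Fin n) :
    coordFun X k ∈ (polyFun X).topologicalClosure :=
  (polyFun X).le_topologicalClosure ⟨MvPolynomial.X k, aeval_X _ _⟩

theorem aeval_coordFun_apply (p : MvPolynomial (Fin N ⊕ Fin n) ℂ) (x : X) :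
    aeval (coordFun X) p x = eval (Sum.elim (fun i => x.1.1 i) (fun j => x.1.2 j)) p := by
  refine (algHom_aeval_eq_eval (ContinuousMap.evalAlgHom ℂ ℂ x) (coordFun X) p).trans ?_
  congr 2
  ext (i | j) <;> rfl

theorem evalCharacter_polyFun_mem_characterHull (hSX : S ⊆ X) {x : X} (hx : x.1 ∈ polyHull2 S) :
    evalCharacter (polyFun X) x ∈ characterHull (evalCharacter (polyFun X) '' {y | y.1 ∈ S}) := by
  rintro ⟨_, p, rfl⟩ C hC hp
  change ‖aeval (coordFun X) p x‖ ≤ C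
  rw [aeval_coordFun_apply]
  refine (hx p).trans (Real.sSup_le (forall_mem_image.2 fun w hw => ?_) hC)
  have hpw : ‖aeval (coordFun X) p ⟨w, hSX hw⟩‖ ≤ C := hp _ (mem_image_of_mem _ hw)
  rwa [aeval_coordFun_apply] at hpw

end PolynomialAlgebra

section Shear

variable {N n : ℕ} {L U : Set (EuclideanSpace ℂ (Fin N))} {K : Set (EuclideanSpace ℂ (Fin n))}
  {f : EuclideanSpace ℂ (Fin N) → EuclideanSpace ℂ (Fin n)}

theorem mem_and_add_mem_of_mem_polyHull2 (hLc : IsCompact L) (hLpc : IsPolyConvex L)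
    (hKc : IsCompact K) (hKpc : IsPolyConvex K) (hU : IsOpen U) (hLU : L ⊆ U)
    (hf : DifferentiableOn ℂ f U) {S : Set (EuclideanSpace ℂ (Fin N) × EuclideanSpace ℂ (Fin n))}
    (hS : IsCompact S) (hSL : ∀ q ∈ S, q.1 ∈ L) (hSK : ∀ q ∈ S, q.2 + f q.1 ∈ K)
    {s : EuclideanSpace ℂ (Fin N) × EuclideanSpace ℂ (Fin n)} (hs : s ∈ polyHull2 S) :
    s.1 ∈ L ∧ s.2 + f s.1 ∈ K := by
  let X := insert s S
  have : CompactSpace X := isCompact_iff_compactSpace.1 (hS.insert s)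
  let A := (polyFun X).topologicalClosure
  have hA : IsClosed (A : Set C(X, ℂ)) := (polyFun X).isClosed_topologicalClosure
  let x₀ : X := ⟨s, mem_insert s S⟩
  have hx₀ : evalCharacter A x₀ ∈ characterHull (evalCharacter A '' {x | x.1 ∈ S}) :=
    evalCharacter_topologicalClosure_mem_characterHull
      (evalCharacter_polyFun_mem_characterHull (subset_insert s S) hs)
  let coord (k : Fin N ⊕ Fin n) : A := ⟨coordFun X k, coordFun_mem_topologicalClosure_polyFun k⟩
  have hx₀L : s.1 ∈ L :=
    hLpc.toLp_mem_of_mem_characterHull hLc hx₀ (a := fun i => coord (Sum.inl i))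
      (forall_mem_image.2 fun x hx => hSL x hx)
  have hXL (x : X) : x.1.1 ∈ L := x.2.elim (fun h => h ▸ hx₀L) (hSL x)
  exact ⟨hx₀L, toLp_add_mem_of_mem_characterHull hA hLc hLpc hKc hKpc hU hLU hf
    (a := fun i => coord (Sum.inl i)) hXL (c := fun j => coord (Sum.inr j)) hx₀
    fun x hx => hSK x hx⟩

theorem isPolyConvex2_shear_image (hLc : IsCompact L) (hLpc : IsPolyConvex L)
    (hKc : IsCompact K) (hKpc : IsPolyConvex K) (hU : IsOpen U) (hLU : L ⊆ U)
    (hf : DifferentiableOn ℂ f U) :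
    IsPolyConvex2 ((fun p : EuclideanSpace ℂ (Fin N) × EuclideanSpace ℂ (Fin n) =>
      (p.1, p.2 - f p.1)) '' (L ×ˢ K)) := by
  have hcont : ContinuousOn (fun p : EuclideanSpace ℂ (Fin N) × EuclideanSpace ℂ (Fin n) =>
      (p.1, p.2 - f p.1)) (L ×ˢ K) :=
    continuousOn_fst.prodMk <| continuousOn_snd.sub <|
      (hf.continuousOn.mono hLU).comp continuousOn_fst fun _ hp => hp.1
  have hS := (hLc.prod hKc).image_of_continuousOn hcont
  refine Subset.antisymm (fun s hs => ?_) (subset_polyHull2 hS)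
  obtain ⟨hsL, hsK⟩ := mem_and_add_mem_of_mem_polyHull2 hLc hLpc hKc hKpc hU hLU hf hS
    (forall_mem_image.2 fun p hp => hp.1) (forall_mem_image.2 fun p hp => by simpa using hp.2) hs
  exact ⟨(s.1, s.2 + f s.1), ⟨hsL, hsK⟩, by simp⟩

end Shear

/-- Let `L ⊆ ℂᴺ` and `K ⊆ ℂⁿ` be compact polynomially convex sets, `U` an open neighbourhood of
`L`, and `f : U → ℂⁿ` a holomorphic map with `f(z) ∉ K` for all `z ∈ L`. Then the set
`S = {(z, ζ − f(z)) : z ∈ L, ζ ∈ K} ⊆ ℂ^{N+n}` is polynomially convex and disjoint from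
`ℂᴺ × {0}`. -/
theorem stmt_4 (N n : ℕ) (L : Set (EuclideanSpace ℂ (Fin N))) (K : Set (EuclideanSpace ℂ (Fin n)))
    (hLc : IsCompact L) (hLpc : IsPolyConvex L) (hKc : IsCompact K) (hKpc : IsPolyConvex K)
    (U : Set (EuclideanSpace ℂ (Fin N))) (hU : IsOpen U) (hLU : L ⊆ U)
    (f : EuclideanSpace ℂ (Fin N) → EuclideanSpace ℂ (Fin n))
    (hf : DifferentiableOn ℂ f U) (hfK : ∀ z ∈ L, f z ∉ K) :
    IsPolyConvex2 ((fun p : EuclideanSpace ℂ (Fin N) × EuclideanSpace ℂ (Fin n) =>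
        (p.1, p.2 - f p.1)) '' (L ×ˢ K)) ∧
      ∀ q ∈ (fun p : EuclideanSpace ℂ (Fin N) × EuclideanSpace ℂ (Fin n) =>
        (p.1, p.2 - f p.1)) '' (L ×ˢ K), q.2 ≠ 0 := by
  refine ⟨isPolyConvex2_shear_image hLc hLpc hKc hKpc hU hLU hf, ?_⟩
  rintro _ ⟨⟨z, ζ⟩, ⟨hz, hζ⟩, rfl⟩ hzero
  exact hfK z hz (sub_eq_zero.1 hzero ▸ hζ)
end
end
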